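/- arXiv:2202.00304 — 3 statements merged into one kernel-verified Lean document; each statement's English description precedes it below -/
import Mathlib

section
/- Let S = k[X_0,...,X_n] be a polynomial ring and let N, M be nonzero finitely generated graded S-modules of finite length. Then Tor_i^S(N, M) ≠ 0 for all 0 ≤ i ≤ n+1. -/
/-!
Background setup (the paper works on projective space `ℙⁿ` over a field `K`):
we encode a coherent sheaf on `ℙⁿ_K` by a module `M` over the homogeneous coordinate
ring `S = K[X₀,…,Xₙ]` (namely `M = Γ_*` of the sheaf), and the intermediate cohomology
module `H^i_*(F) = ⊕_ν H^i(ℙⁿ, F(ν))` (for `i ≥ 1`) by the local cohomology module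
`H^{i+1}_𝔪(M)` at the irrelevant maximal ideal `𝔪 = (X₀,…,Xₙ)`, to which it is
canonically isomorphic.
-/

open CategoryTheory TensorProduct

noncomputable section

/-- The homogeneous coordinate ring `S = K[X₀,…,Xₙ]` of `ℙⁿ`. -/
abbrev PolyS (K : Type) [Field K] (n : ℕ) : Type := MvPolynomial (Fin (n+1)) K

variable (K : Type) [Field K] (n : ℕ)

/-- The irrelevant maximal ideal `𝔪 = (X₀,…,Xₙ)` of `S`. -/
def irrel : Ideal (PolyS K n) := Ideal.span (Set.range MvPolynomial.X)

/-- `H^i_*` of the sheaf on `ℙⁿ` associated to the `S`-module `M`, encoded (for `i ≥ 1`)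
as the local cohomology module `H^{i+1}_𝔪(M)`. -/
def Hstar (i : ℕ) (M : Type) [AddCommGroup M] [Module (PolyS K n) M] :
    ModuleCat (PolyS K n) :=
  (localCohomology (irrel K n) (i+1)).obj (ModuleCat.of (PolyS K n) M)

/-- `M` is (the module of sections `Γ_*` of) an algebraic vector bundle on `ℙⁿ`:
finitely generated, depth `≥ 2` at `𝔪` (i.e. `H⁰_𝔪(M) = H¹_𝔪(M) = 0`, so `M = Γ_*(M̃)`),
and locally free at every prime other than the irrelevant ideal. -/
structure IsBundleModule (M : Type) [AddCommGroup M] [Module (PolyS K n) M] : Prop where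
  finite : Module.Finite (PolyS K n) M
  h0 : Subsingleton ((localCohomology (irrel K n) 0).obj (ModuleCat.of (PolyS K n) M))
  h1 : Subsingleton ((localCohomology (irrel K n) 1).obj (ModuleCat.of (PolyS K n) M))
  locFree : ∀ p : PrimeSpectrum (PolyS K n), p.asIdeal ≠ irrel K n →
    Module.Free (Localization.AtPrime p.asIdeal) (LocalizedModule p.asIdeal.primeCompl M)

/-- `M` represents a vector bundle of rank two on `ℙⁿ`. -/
structure IsRankTwoBundleModule (M : Type) [AddCommGroup M] [Module (PolyS K n) M]
    extends IsBundleModule K n M : Prop where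
  rank2 : ∀ p : PrimeSpectrum (PolyS K n), p.asIdeal ≠ irrel K n →
    Module.rank (Localization.AtPrime p.asIdeal) (LocalizedModule p.asIdeal.primeCompl M) = 2

/-- A finite length module which is moreover supported at the irrelevant ideal: the
(ungraded avatar of the) notion of a *graded* `S`-module of finite length. -/
def IsGradedFiniteLength (N : Type) [AddCommGroup N] [Module (PolyS K n) N] : Prop :=
  IsFiniteLength (PolyS K n) N ∧
    ∃ c : ℕ, (irrel K n) ^ c ≤ Module.annihilator (PolyS K n) N

/-!
For a variable `t` of `S` let `N[T]` be the `S`-module on which `t` acts as `T` and the other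
variables act through `N`; it sits in `0 → N[T] → N[T] → N → 0`, the injection being `T - t₀`, where
`t₀` is the action of `t` on `N`. On `Torᵢ(N[T], M)` the operator `T` is nilpotent, since it is an
action of `S` and can be computed on `M`, while `t₀` is nilpotent because it is so on `N`; hence
`T - t₀` is nilpotent. If `Torᵢ₊₁(N, M) = 0` it is also injective, so `Torᵢ(N[T], M) = 0`. Using up
one variable at each step leads down to `Tor₀(N[T₁, …, Tᵣ], M) = 0`, whence `N ⊗ M = 0`, although
`N` and `M` both surject onto the residue field.
-/

section Derived

open MonoidalCategory Limits

universe u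

theorem isZero_of_mono_of_isNilpotent {C : Type*} [Category* C] [Preadditive C] {X : C}
    (f : X ⟶ X) [Mono f] (hf : IsNilpotent (End.of f)) : IsZero X := by
  have hreg : IsLeftRegular (End.of f) := fun g h e => (cancel_mono f).1 e
  obtain ⟨k, hk⟩ := hf
  have := isLeftRegular_zero_iff_subsingleton.1 (hk ▸ hreg.pow k)
  exact (IsZero.iff_id_eq_zero X).2 (Subsingleton.elim (α := End X) _ _)

theorem isZero_homology_of_isNilpotent
    {C ι : Type*} [Category* C] [Abelian C] {c : ComplexShape ι}
    {X Y : HomologicalComplex C c} {f : X ⟶ X} {g : X ⟶ Y} {w : f ≫ g = 0}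
    (hS : (ShortComplex.mk f g w).ShortExact) {i j : ι} (hij : c.Rel i j)
    (hf : IsNilpotent (End.of (HomologicalComplex.homologyMap f j)))
    (hY : IsZero (Y.homology i)) : IsZero (X.homology j) := by
  have : Mono (HomologicalComplex.homologyMap f j) :=
    (hS.homology_exact₁ i j hij).mono_g (hY.eq_of_src _ _)
  exact isZero_of_mono_of_isNilpotent _ hf

instance homologyFunctor_linear {R C ι : Type*} [Ring R] [Category* C] [Preadditive C]
    [Linear R C] [CategoryWithHomology C] (c : ComplexShape ι) (i : ι) :
    (HomologicalComplex.homologyFunctor C c i).Linear R where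
  map_smul φ r := ShortComplex.homologyMap_smul
    ((HomologicalComplex.shortComplexFunctor C c i).map φ) r

theorem isNilpotent_mapEnd_of_pow_eq_smul {R C D : Type*} [Ring R]
    [Category* C] [Preadditive C] [Linear R C] [Category* D] [Preadditive D] [Linear R D]
    (F : C ⥤ D) [F.Linear R] {X : C} {r : R} (hr : r • 𝟙 (F.obj X) = 0)
    {f h : End X} {k : ℕ} (hf : f ^ k = r • h) : IsNilpotent (F.mapEnd X f) := by
  refine ⟨k, ?_⟩
  calc F.mapEnd X f ^ k = F.map (f ^ k) := (map_pow (F.mapEnd X) f k).symm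
    _ = r • F.map h := by rw [hf]; exact F.map_smul r h
    _ = r • 𝟙 (F.obj X) ≫ F.map h := by rw [Category.id_comp]
    _ = 0 := by rw [← Linear.smul_comp, hr, zero_comp]

instance single_linear {R C ι : Type*} [Ring R] [Category* C] [Preadditive C] [Linear R C]
    [HasZeroObject C] [DecidableEq ι] (c : ComplexShape ι) (j : ι) :
    (HomologicalComplex.single C c j).Linear R where
  map_smul f r := by
    apply HomologicalComplex.from_single_hom_ext
    simp [HomologicalComplex.single_map_f_self]

instance leftDerived_linear {R C D : Type*} [Ring R] [Category* C] [Abelian C]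
    [HasProjectiveResolutions C] [Linear R C] [Category* D] [Abelian D] [Linear R D]
    (F : C ⥤ D) [F.Additive] [F.Linear R] (i : ℕ) : (F.leftDerived i).Linear R where
  map_smul {X Y} f r := by
    let P := projectiveResolution X
    let Q := projectiveResolution Y
    let φ := ProjectiveResolution.lift f P Q
    have hφ : φ ≫ Q.π = P.π ≫ (ChainComplex.single₀ C).map f :=
      ProjectiveResolution.lift_commutes f P Q
    have hrφ : (r • φ) ≫ Q.π = P.π ≫ (ChainComplex.single₀ C).map (r • f) := by
      rw [Linear.smul_comp, hφ, Functor.map_smul, Linear.comp_smul]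
    rw [F.leftDerived_map_eq i f φ hφ, F.leftDerived_map_eq i (r • f) (r • φ) hrφ]
    simp only [Functor.comp_map, Functor.map_smul, Linear.smul_comp, Linear.comp_smul]

/-- The complex `N ⊗ P` as a functor of `N`. Its homology is `Tor(N, M)` when `P` is a projective
resolution of `M`, because Mathlib derives `Tor` in its second argument. -/
def tensorComplex {C ι : Type*} [Category* C] [MonoidalCategory C] [Preadditive C]
    [MonoidalPreadditive C] {c : ComplexShape ι} (P : HomologicalComplex C c) :
    C ⥤ HomologicalComplex C c where
  obj N := (((tensoringLeft C).obj N).mapHomologicalComplex c).obj P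
  map f := (NatTrans.mapHomologicalComplex ((tensoringLeft C).map f) c).app P

instance tensorComplex_additive {C ι : Type*} [Category* C] [MonoidalCategory C] [Preadditive C]
    [MonoidalPreadditive C] {c : ComplexShape ι} (P : HomologicalComplex C c) :
    (tensorComplex P).Additive where
  map_add := by
    intros
    ext i
    exact (tensorRight (P.X i)).map_add

instance tensorComplex_linear {R C ι : Type*} [Ring R] [Category* C] [MonoidalCategory C]
    [Preadditive C] [MonoidalPreadditive C] [Linear R C] [MonoidalLinear R C]
    {c : ComplexShape ι} (P : HomologicalComplex C c) : (tensorComplex P).Linear R where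
  map_smul f r := by
    ext i
    exact MonoidalLinear.smul_whiskerRight r f (P.X i)

variable {S : Type u} [CommRing S]

theorem shortExact_map_tensorComplex {ι : Type*} {c : ComplexShape ι}
    {P : HomologicalComplex (ModuleCat.{u} S) c} (hP : ∀ i, Projective (P.X i))
    {T : ShortComplex (ModuleCat.{u} S)} (hT : T.ShortExact) :
    (T.map (tensorComplex P)).ShortExact := by
  refine HomologicalComplex.shortExact_of_degreewise_shortExact _ fun i => ?_
  have : Module.Projective S (P.X i) := (IsProjective.iff_projective _).2 (hP i)
  exact hT.map_of_exact (tensorRight (P.X i))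

theorem smul_id_tor_eq_zero {M : ModuleCat.{u} S} {s : S} (hs : s ∈ Module.annihilator S M)
    (N : ModuleCat.{u} S) (i : ℕ) :
    s • 𝟙 (((Tor (ModuleCat S) i).obj N).obj M) = 0 := by
  have hM : s • 𝟙 M = 0 := by
    ext x
    exact Module.mem_annihilator.1 hs x
  let F := ((tensoringLeft (ModuleCat S)).obj N).leftDerived i
  calc s • 𝟙 (F.obj M) = F.map (s • 𝟙 M) := by rw [F.map_smul, F.map_id]
    _ = 0 := by rw [hM, ← zero_smul S (0 : M ⟶ M), F.map_smul, zero_smul]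

theorem isZero_tor_of_isZero_tor_succ {Q N M : ModuleCat.{u} S} {d h : Q ⟶ Q} {g : Q ⟶ N}
    {w : d ≫ g = 0} (hS : (ShortComplex.mk d g w).ShortExact)
    {s : S} (hs : s ∈ Module.annihilator S M)
    {k : ℕ} (hd : End.of d ^ k = s • End.of h)
    {i : ℕ} (hN : IsZero (((Tor (ModuleCat S) (i + 1)).obj N).obj M)) :
    IsZero (((Tor (ModuleCat S) i).obj Q).obj M) := by
  let P := projectiveResolution M
  let e (N : ModuleCat S) (i : ℕ) :
      ((Tor (ModuleCat S) i).obj N).obj M ≅ ((tensorComplex P.complex).obj N).homology i :=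
    P.isoLeftDerivedObj ((tensoringLeft _).obj N) i
  have hQ : s • 𝟙 (((tensorComplex P.complex).obj Q).homology i) = 0 := by
    rw [← (e Q i).inv_hom_id, ← Category.id_comp (e Q i).hom, ← Linear.comp_smul,
      ← Linear.smul_comp, smul_id_tor_eq_zero hs, zero_comp, comp_zero]
  have hnil : IsNilpotent (End.of
      (HomologicalComplex.homologyMap ((tensorComplex P.complex).map d) i)) :=
    isNilpotent_mapEnd_of_pow_eq_smul
      (tensorComplex P.complex ⋙ HomologicalComplex.homologyFunctor _ _ i) hQ hd
  exact (isZero_homology_of_isNilpotent (shortExact_map_tensorComplex P.projective hS) (by simp)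
    hnil (hN.of_iso (e N (i + 1)).symm)).of_iso (e Q i)

theorem isZero_tensor_of_epi {Q N M : ModuleCat.{u} S} (g : Q ⟶ N) [Epi g] (h : IsZero (Q ⊗ M)) :
    IsZero (N ⊗ M) :=
  have : Subsingleton (Q ⊗[S] M) := ModuleCat.isZero_iff_subsingleton.1 h
  have hg : Function.Surjective g := (ModuleCat.epi_iff_surjective g).1 inferInstance
  ModuleCat.isZero_iff_subsingleton.2 (LinearMap.rTensor_surjective M hg).subsingleton

end Derived

section PolynomialModule

open Polynomial

universe u v

section Eval

variable {R N : Type*} [CommRing R] [AddCommGroup N] [Module R N]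

theorem coeff_X_sub_C_smul_succ (r : R) (q : PolynomialModule R N) (k : ℕ) :
    ((X - C r) • q).coeff (k + 1) = q.coeff k - r • q.coeff (k + 1) := by
  have hX : ((X : R[X]) • q).coeff (k + 1) = q.coeff k := by
    simpa [monomial_one_one_eq_X] using PolynomialModule.monomial_smul_apply 1 (1 : R) q (k + 1)
  have hC : (C r • q).coeff (k + 1) = r • q.coeff (k + 1) := by
    simpa using PolynomialModule.monomial_smul_apply 0 r q (k + 1)
  rw [← hX, ← hC, sub_smul]
  exact DFunLike.congr_fun (map_sub PolynomialModule.coeffAddEquiv (X • q) (C r • q)) (k + 1)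

theorem X_sub_C_smul_injective (r : R) :
    Function.Injective fun q : PolynomialModule R N => (X - C r) • q := by
  refine (injective_iff_map_eq_zero (DistribSMul.toAddMonoidHom _ (X - C r : R[X]))).2
    fun q hq => ?_
  change (X - C r) • q = 0 at hq
  have hcoeff (e k : ℕ) : q.coeff k = r ^ e • q.coeff (k + e) := by
    induction e with
    | zero => simp
    | succ e ih =>
      have := coeff_X_sub_C_smul_succ r q (k + e)
      rw [hq, PolynomialModule.coeff_zero, Finsupp.zero_apply, eq_comm, sub_eq_zero] at this
      rw [ih, this, smul_smul, pow_succ, add_assoc]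
  obtain ⟨e, he⟩ := q.coeff.support.exists_nat_subset_range
  ext k
  have : q.coeff (k + e) = 0 := Finsupp.notMem_support_iff.1 fun h => by
    simpa using he h
  simpa [this] using hcoeff e k

theorem exists_eq_X_sub_C_smul_add_single_eval (r : R) (q : PolynomialModule R N) :
    ∃ p, q = (X - C r) • p + PolynomialModule.single R 0 (PolynomialModule.eval r q) := by
  induction q using PolynomialModule.induction_linear with
  | zero => exact ⟨0, by simp⟩
  | add q q' hq hq' =>
    obtain ⟨p, hp⟩ := hq
    obtain ⟨p', hp'⟩ := hq'
    refine ⟨p + p', ?_⟩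
    rw [map_add, PolynomialModule.single_add, smul_add, add_add_add_comm, ← hp, ← hp']
  | single k m =>
    obtain ⟨a, ha⟩ : X - C r ∣ X ^ k - C r ^ k := sub_dvd_pow_sub_pow X (C r) k
    refine ⟨a • PolynomialModule.single R 0 m, ?_⟩
    have hX : (X ^ k : R[X]) • PolynomialModule.single R 0 m = PolynomialModule.single R k m := by
      simp [X_pow_eq_monomial]
    have hC : (C r ^ k : R[X]) • PolynomialModule.single R 0 m =
        PolynomialModule.single R 0 (r ^ k • m) := by
      rw [← C_pow]
      simpa using PolynomialModule.monomial_smul_single 0 (r ^ k) 0 m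
    rw [smul_smul, ← ha, sub_smul, hX, hC, PolynomialModule.eval_single, sub_add_cancel]

theorem exact_X_sub_C_smul_eval (r : R) :
    Function.Exact (fun q : PolynomialModule R N => (X - C r) • q) (PolynomialModule.eval r) := by
  intro q
  constructor
  · intro hq
    obtain ⟨p, hp⟩ := exists_eq_X_sub_C_smul_add_single_eval r q
    exact ⟨p, by simpa [hq] using hp.symm⟩
  · rintro ⟨p, rfl⟩
    simp

theorem polynomialModule_eval_surjective (r : R) :
    Function.Surjective (PolynomialModule.eval r : PolynomialModule R N →ₗ[R] N) :=
  fun m => ⟨PolynomialModule.single R 0 m, by simp⟩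

theorem C_mem_annihilator_polynomialModule {r : R} (hr : r ∈ Module.annihilator R N) :
    C r ∈ Module.annihilator R[X] (PolynomialModule R N) := by
  refine Module.mem_annihilator.2 fun q => ?_
  ext k
  simpa [Module.mem_annihilator.1 hr] using PolynomialModule.monomial_smul_apply 0 r q k

end Eval

variable {S : Type u} [CommRing S]

/-- The module `N[T]` over `S[T]`, restricted along a ring homomorphism `φ : S → S[T]`. For `φ`
sending one variable `t` of `S` to `T` and fixing the others, `t` acts as `T` and the others act on
the coefficients. -/
abbrev twist (φ : S →+* S[X]) (N : ModuleCat.{v} S) : ModuleCat.{v} S :=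
  (ModuleCat.restrictScalars φ).obj (ModuleCat.of S[X] (PolynomialModule S N))

/-- Multiplication by polynomials on `N[T]`, as `S`-linear endomorphisms of `twist φ N`. -/
def twistMul (φ : S →+* S[X]) (N : ModuleCat.{v} S) : S[X] →* End (twist φ N) :=
  ((ModuleCat.restrictScalars φ).mapEnd (ModuleCat.of S[X] (PolynomialModule S N))).comp
    (algebraMap S[X] (End (ModuleCat.of S[X] (PolynomialModule S N)))).toMonoidHom

/-- The evaluation `N[T] → N` at `T = r`. It is `S`-linear on `twist φ N` because evaluation at `r`
is a retraction of `φ`. -/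
def twistEval {φ : S →+* S[X]} {r : S} (hφ : (evalRingHom r).comp φ = RingHom.id S)
    (N : ModuleCat.{v} S) : twist φ N ⟶ N :=
  ModuleCat.ofHom (X := twist φ N)
    { toFun := PolynomialModule.eval r
      map_add' := map_add _
      map_smul' a q := (PolynomialModule.eval_smul (φ a) q r).trans
        (congrArg (· • PolynomialModule.eval r q) (RingHom.congr_fun hφ a)) }

section ShortExact

variable {φ : S →+* S[X]} {r : S} (hφ : (evalRingHom r).comp φ = RingHom.id S)

theorem twistMul_X_sub_C_comp_twistEval (N : ModuleCat.{v} S) :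
    (twistMul φ N (X - C r)).asHom ≫ twistEval hφ N = 0 := by
  ext q
  exact (exact_X_sub_C_smul_eval r).apply_apply_eq_zero q

instance epi_twistEval (N : ModuleCat.{v} S) : Epi (twistEval hφ N) :=
  (ModuleCat.epi_iff_surjective _).2 (polynomialModule_eval_surjective r)

theorem shortExact_twist (N : ModuleCat.{v} S) :
    (ShortComplex.mk _ _ (twistMul_X_sub_C_comp_twistEval hφ N)).ShortExact where
  exact := (ShortComplex.ShortExact.moduleCat_exact_iff_function_exact _).2
    (exact_X_sub_C_smul_eval r)
  mono_f := (ModuleCat.mono_iff_injective _).2 (X_sub_C_smul_injective r)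
  epi_g := epi_twistEval hφ N

end ShortExact

variable {φ : S →+* S[X]} {N : ModuleCat.{v} S}

theorem mem_annihilator_twist {a : S} (hφ : φ a = C a)
    (ha : a ∈ Module.annihilator S N) : a ∈ Module.annihilator S (twist φ N) :=
  Module.mem_annihilator.2 fun q => by
    rw [ModuleCat.restrictScalars.smul_def, hφ]
    exact Module.mem_annihilator.1 (C_mem_annihilator_polynomialModule ha) _

theorem exists_twistMul_X_sub_C_pow_eq_smul {r : S} (hr : φ r = X) {e : ℕ}
    (he : r ^ e ∈ Module.annihilator S N) (c : ℕ) :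
    ∃ h : End (twist φ N), twistMul φ N (X - C r) ^ (c + e) = r ^ c • h := by
  obtain ⟨a, b, hab⟩ : ∃ a b : S[X], a * X ^ c + b * C r ^ e = (X - C r) ^ (c + e) := by
    rw [← Ideal.mem_span_pair, sub_eq_add_neg]
    refine Ideal.add_pow_mem_of_pow_mem_of_le _ (Ideal.subset_span (by simp)) ?_ (Nat.le_succ _)
    rw [neg_pow]
    exact Ideal.mul_mem_left _ _ (Ideal.subset_span (by simp))
  refine ⟨twistMul φ N a, ?_⟩
  rw [← map_pow, ← hab]
  refine ModuleCat.hom_ext (LinearMap.ext fun (q : PolynomialModule S N) => ?_)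
  have hq : C r ^ e • q = 0 := by
    rw [← C_pow]
    exact Module.mem_annihilator.1 (C_mem_annihilator_polynomialModule he) q
  calc (a * X ^ c + b * C r ^ e) • q = X ^ c • a • q := by
        rw [add_smul, mul_smul b, hq, smul_zero, add_zero, mul_comm, mul_smul]
    _ = φ (r ^ c) • a • q := by rw [map_pow, hr]

end PolynomialModule

section MaximalIdeal

variable {R N M : Type*} [CommRing R] [AddCommGroup N] [Module R N] [Nontrivial N]
  [AddCommGroup M] [Module R M] [Nontrivial M]

theorem smul_top_ne_top_of_pow_le_annihilator {I : Ideal R} {c : ℕ}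
    (hI : I ^ c ≤ Module.annihilator R N) : I • (⊤ : Submodule R N) ≠ ⊤ := by
  intro h
  have hpow (k : ℕ) : I ^ k • (⊤ : Submodule R N) = ⊤ := by
    induction k with
    | zero => simp
    | succ k ih => rw [pow_succ, Submodule.mul_smul, h, ih]
  refine bot_ne_top (α := Submodule R N) ?_
  rw [← hpow c, eq_comm, ← le_bot_iff, Submodule.smul_le]
  exact fun r hr x _ => Module.mem_annihilator.1 (hI hr) x

theorem exists_surjective_quotient_of_pow_le_annihilator {m : Ideal R} [m.IsMaximal]
    {c : ℕ} (hm : m ^ c ≤ Module.annihilator R N) : ∃ f : N →ₗ[R] R ⧸ m, Function.Surjective f := by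
  let := Ideal.Quotient.field m
  have : Nontrivial (N ⧸ m • (⊤ : Submodule R N)) :=
    Submodule.Quotient.nontrivial_iff.2 (smul_top_ne_top_of_pow_le_annihilator hm)
  obtain ⟨v, hv⟩ := exists_ne (0 : N ⧸ m • (⊤ : Submodule R N))
  obtain ⟨f, hf⟩ := Module.Projective.exists_dual_ne_zero (R ⧸ m) hv
  have hsurj : Function.Surjective f := LinearMap.surjective (fun h => hf (by simp [h]))
  exact ⟨f.restrictScalars R ∘ₗ Submodule.mkQ _, hsurj.comp (Submodule.mkQ_surjective _)⟩

theorem nontrivial_tensorProduct_of_pow_le_annihilator {m : Ideal R} [m.IsMaximal]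
    {c e : ℕ} (hN : m ^ c ≤ Module.annihilator R N) (hM : m ^ e ≤ Module.annihilator R M) :
    Nontrivial (N ⊗[R] M) := by
  obtain ⟨f, hf⟩ := exists_surjective_quotient_of_pow_le_annihilator hN
  obtain ⟨g, hg⟩ := exists_surjective_quotient_of_pow_le_annihilator hM
  have hmul : Function.Surjective (LinearMap.mul' R (R ⧸ m)) := fun a => ⟨a ⊗ₜ 1, by simp⟩
  exact (hmul.comp (TensorProduct.map_surjective hf hg)).nontrivial

theorem isMaximal_idealOfVars (σ K : Type*) [Field K] :
    (MvPolynomial.idealOfVars σ K).IsMaximal := by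
  have h : MvPolynomial.idealOfVars σ K =
      RingHom.ker (MvPolynomial.constantCoeff (σ := σ) (R := K)) := by
    refine le_antisymm (Ideal.span_le.2 ?_) fun p hp => ?_
    · rintro _ ⟨i, rfl⟩
      simp
    · rw [← pow_one (MvPolynomial.idealOfVars σ K), MvPolynomial.mem_pow_idealOfVars_iff']
      intro x hx
      rwa [(Finsupp.degree_eq_zero_iff x).1 (Nat.lt_one_iff.1 hx)]
  rw [h]
  exact RingHom.ker_isMaximal_of_surjective _ fun a => ⟨MvPolynomial.C a, by simp⟩

end MaximalIdeal

section Tor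

open MonoidalCategory Limits MvPolynomial

universe u v

variable {R : Type u} {σ : Type v} [CommRing R]

/-- The substitution `X j ↦ T` in a polynomial ring, fixing the other variables. It views `X j` as
the variable of a univariate polynomial whose coefficients lie in the same ring, not in one with
fewer variables. -/
def isolateVar [DecidableEq σ] (j : σ) : MvPolynomial σ R →+* Polynomial (MvPolynomial σ R) :=
  (aeval (R := R) (Function.update (fun i => Polynomial.C (X i)) j Polynomial.X)).toRingHom

theorem isolateVar_X_self [DecidableEq σ] (j : σ) :
    isolateVar j (X j : MvPolynomial σ R) = Polynomial.X := by
  simp [isolateVar]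

theorem isolateVar_X_of_ne [DecidableEq σ] {i j : σ} (hij : i ≠ j) :
    isolateVar j (X i : MvPolynomial σ R) = Polynomial.C (X i) := by
  simp [isolateVar, hij]

theorem evalRingHom_comp_isolateVar [DecidableEq σ] (j : σ) :
    (Polynomial.evalRingHom (X j)).comp (isolateVar j) = RingHom.id (MvPolynomial σ R) := by
  apply MvPolynomial.ringHom_ext
  · intro a
    simp [isolateVar, MvPolynomial.algebraMap_eq, Polynomial.algebraMap_apply]
  · intro i
    obtain rfl | hij := eq_or_ne i j
    · simp [isolateVar_X_self]
    · simp [isolateVar_X_of_ne hij]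

theorem isZero_tensor_of_isZero_tor {M N : ModuleCat.{max u v} (MvPolynomial σ R)} {T : Finset σ}
    (hM : ∀ j ∈ T, X j ∈ (Module.annihilator (MvPolynomial σ R) M).radical)
    (hN : ∀ j ∈ T, X j ∈ (Module.annihilator (MvPolynomial σ R) N).radical)
    (hTor : IsZero (((Tor (ModuleCat (MvPolynomial σ R)) T.card).obj N).obj M)) :
    IsZero (N ⊗ M) := by
  classical
  induction T using Finset.induction_on generalizing N with
  | empty => exact hTor.of_iso (((tensoringLeft _).obj N).leftDerivedZeroIsoSelf.app M).symm
  | insert j T hj ih =>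
    obtain ⟨c, hc⟩ := hM j (T.mem_insert_self j)
    obtain ⟨e, he⟩ := hN j (T.mem_insert_self j)
    have hφ := evalRingHom_comp_isolateVar (R := R) j
    have hQ : ∀ i ∈ T,
        X i ∈ (Module.annihilator (MvPolynomial σ R) (twist (isolateVar j) N)).radical := by
      intro i hi
      obtain ⟨k, hk⟩ := hN i (Finset.mem_insert_of_mem hi)
      have hij : i ≠ j := ne_of_mem_of_not_mem hi hj
      exact ⟨k, mem_annihilator_twist (by simp [isolateVar_X_of_ne hij]) hk⟩
    obtain ⟨h, hd⟩ := exists_twistMul_X_sub_C_pow_eq_smul (isolateVar_X_self j) he c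
    rw [Finset.card_insert_of_notMem hj] at hTor
    have hQM := ih (fun i hi => hM i (Finset.mem_insert_of_mem hi)) hQ
      (isZero_tor_of_isZero_tor_succ (shortExact_twist hφ N) hc hd hTor)
    exact isZero_tensor_of_epi (twistEval hφ N) hQM

theorem tor_nonvanishing_of_finiteLength_general
    {m : Ideal (MvPolynomial σ R)} [m.IsMaximal] {T : Finset σ} (hT : ∀ j ∈ T, X j ∈ m)
    (N M : Type (max u v)) [AddCommGroup N] [Module (MvPolynomial σ R) N] [Nontrivial N]
    [AddCommGroup M] [Module (MvPolynomial σ R) M] [Nontrivial M]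
    (hN : ∃ c, m ^ c ≤ Module.annihilator (MvPolynomial σ R) N)
    (hM : ∃ c, m ^ c ≤ Module.annihilator (MvPolynomial σ R) M) {i : ℕ} (hi : i ≤ T.card) :
    Nontrivial (((Tor (ModuleCat (MvPolynomial σ R)) i).obj (ModuleCat.of _ N)).obj
      (ModuleCat.of _ M)) := by
  obtain ⟨c, hc⟩ := hN
  obtain ⟨e, he⟩ := hM
  obtain ⟨T', hT', rfl⟩ := Finset.exists_subset_card_eq hi
  have hNM := nontrivial_tensorProduct_of_pow_le_annihilator hc he
  by_contra hTor
  rw [not_nontrivial_iff_subsingleton, ← ModuleCat.isZero_iff_subsingleton] at hTor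
  have hNM' := isZero_tensor_of_isZero_tor
    (fun j hj => ⟨e, he (Ideal.pow_mem_pow (hT j (hT' hj)) e)⟩)
    (fun j hj => ⟨c, hc (Ideal.pow_mem_pow (hT j (hT' hj)) c)⟩) hTor
  exact not_subsingleton (N ⊗[MvPolynomial σ R] M) (ModuleCat.isZero_iff_subsingleton.1 hNM')

end Tor

/-- Lichtenbaum.  Let `S = K[X₀,…,Xₙ]` and let `N, M` be nonzero
finitely generated graded `S`-modules of finite length.  Then `Tor_i^S(N,M) ≠ 0`
for all `0 ≤ i ≤ n+1`. -/
theorem tor_nonvanishing_of_finiteLength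
    (K : Type) [Field K] (n : ℕ)
    (N M : Type) [AddCommGroup N] [Module (PolyS K n) N]
    [AddCommGroup M] [Module (PolyS K n) M]
    (hN : Nontrivial N) (hM : Nontrivial M)
    (hNfl : IsGradedFiniteLength K n N) (hMfl : IsGradedFiniteLength K n M) :
    ∀ i : ℕ, i ≤ n + 1 →
      Nontrivial (((Tor (ModuleCat (PolyS K n)) i).obj
        (ModuleCat.of (PolyS K n) N)).obj (ModuleCat.of (PolyS K n) M)) := by
  intro i hi
  have : (irrel K n).IsMaximal := isMaximal_idealOfVars (Fin (n + 1)) K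
  exact tor_nonvanishing_of_finiteLength_general (m := irrel K n) (T := Finset.univ)
    (fun j _ => Ideal.subset_span ⟨j, rfl⟩) N M hNfl.2 hMfl.2 (by simpa using hi)
end
end

section
/- Let S = k[X_0,...,X_n] and let N, M be nonzero finite length graded S-modules. In a minimal graded free resolution 0 → L_{n+1} → L_n → ... → L_0 → N → 0, the map L_{n+1} ⊗_S M → L_n ⊗_S M is not injective; equivalently Tor_{n+1}^S(N, M) ≠ 0. -/
/-!
Background setup (the paper works on projective space `ℙⁿ` over a field `K`):
we encode a coherent sheaf on `ℙⁿ_K` by a module `M` over the homogeneous coordinate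
ring `S = K[X₀,…,Xₙ]` (namely `M = Γ_*` of the sheaf), and the intermediate cohomology
module `H^i_*(F) = ⊕_ν H^i(ℙⁿ, F(ν))` (for `i ≥ 1`) by the local cohomology module
`H^{i+1}_𝔪(M)` at the irrelevant maximal ideal `𝔪 = (X₀,…,Xₙ)`, to which it is
canonically isomorphic.
-/

open CategoryTheory TensorProduct

noncomputable section

variable (K : Type) [Field K] (n : ℕ)

/-- A minimal graded free resolution `⋯ → L₁ → L₀ → N → 0` of an `S`-module `N`
(minimality: all differentials have entries in the maximal ideal `𝔪`).
Here `d i : L (i+1) → L i` and `P_k(N)`, the `k`-th syzygy module, is `range (d k)`,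
i.e. the image of `f_{k+1} : L_{k+1} → L_k`. -/
structure MinimalResolution (N : Type) [AddCommGroup N] [Module (PolyS K n) N] where
  L : ℕ → Type
  [addCommGroup : ∀ i, AddCommGroup (L i)]
  [module : ∀ i, Module (PolyS K n) (L i)]
  free : ∀ i, Module.Free (PolyS K n) (L i)
  finite : ∀ i, Module.Finite (PolyS K n) (L i)
  d : ∀ i : ℕ, L (i+1) →ₗ[PolyS K n] L i
  aug : L 0 →ₗ[PolyS K n] N
  aug_surjective : Function.Surjective aug
  exact0 : LinearMap.range (d 0) = LinearMap.ker aug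
  exact : ∀ i : ℕ, LinearMap.range (d (i+1)) = LinearMap.ker (d i)
  minimal : ∀ i : ℕ, LinearMap.range (d i) ≤ (irrel K n) • (⊤ : Submodule (PolyS K n) (L i))
  minimal0 : LinearMap.ker aug ≤ (irrel K n) • (⊤ : Submodule (PolyS K n) (L 0))

attribute [instance] MinimalResolution.addCommGroup MinimalResolution.module

/-!
Let `J` be generated by a weakly regular sequence `x₁, …, x_m` in a commutative ring `R`, and let
`L` be a free resolution of `N` whose differentials vanish modulo `J`.

If `x` is regular on all terms of a complex `L` that is exact in positive degrees, then the
shifted complex `L_{i+1} / x L_{i+1}` is again exact in positive degrees. If moreover `s ∈ L₀`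
represents a nonzero element of `H₀(L)` killed by `J`, lift `x s` to `v ∈ L₁`: the class of `v` is
a nonzero element of the new `H₀`, again killed by `J`. After using up the whole sequence this
gives `L_m / J L_m ≠ 0`, while exactness in degree `m + 1` of a complex with zero differentials
gives `L_{m+1} / J L_{m+1} = 0`, so that `L_{m+1} = 0`.

Hence `L_m → L_{m-1}` is injective. Tensoring with `M` destroys injectivity, because `f ⊗ t ↦ 0`
for every `t ∈ M` killed by `J`. If `Tor_m(N, M)` were zero, replacing `N` by its successive
syzygies and shifting dimension would leave `Tor₁` of the cokernel of `L_m → L_{m-1}` with `M`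
equal to zero, and injectivity would be preserved.
-/

section RegularSequence

open Ideal RingTheory.Sequence

open scoped Pointwise

variable {R : Type*} [CommRing R]

theorem isWeaklyRegular_of_flat {rs : List R} (hrs : IsWeaklyRegular R rs)
    (F : Type*) [AddCommGroup F] [Module R F] [Module.Flat R F] : IsWeaklyRegular F rs :=
  ((TensorProduct.lid R F).isWeaklyRegular_congr rs).1 hrs.isWeaklyRegular_rTensor

variable {L : ℕ → Type*} [∀ i, AddCommGroup (L i)] [∀ i, Module R (L i)]
  {d : ∀ i, L (i + 1) →ₗ[R] L i}

theorem exact_quotSMulTopMap_succ (hd : ∀ i, Function.Exact (d (i + 1)) (d i)) {x : R}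
    (hx : ∀ i, IsSMulRegular (L i) x) (i : ℕ) :
    Function.Exact (QuotSMulTop.map x (d (i + 2))) (QuotSMulTop.map x (d (i + 1))) :=
  QuotSMulTop.map_first_exact_on_four_term_exact_of_isSMulRegular_last (hd (i + 1)) (hd i) (hx i)

theorem mk_mem_range_quotSMulTopMap_iff {A B : Type*} [AddCommGroup A] [Module R A]
    [AddCommGroup B] [Module R B] {f : A →ₗ[R] B} {x : R} {b : B} :
    (Submodule.Quotient.mk b : QuotSMulTop x B) ∈ LinearMap.range (QuotSMulTop.map x f) ↔
      ∃ a b', b = f a + x • b' := by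
  constructor
  · rintro ⟨a, ha⟩
    obtain ⟨a, rfl⟩ := Submodule.Quotient.mk_surjective _ a
    rw [QuotSMulTop.map_apply_mk, eq_comm, Submodule.Quotient.eq] at ha
    obtain ⟨b', -, hb'⟩ := (Submodule.mem_smul_pointwise_iff_exists _ _ _).1 ha
    exact ⟨a, b', by rw [hb', add_sub_cancel]⟩
  · rintro ⟨a, b', rfl⟩
    refine ⟨Submodule.Quotient.mk a, ?_⟩
    rw [QuotSMulTop.map_apply_mk, eq_comm, Submodule.Quotient.eq, add_sub_cancel_left]
    exact Submodule.smul_mem_pointwise_smul _ _ _ trivial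

theorem nontrivial_of_isWeaklyRegular {rs : List R} (hd : ∀ i, Function.Exact (d (i + 1)) (d i))
    (hrs : ∀ i, IsWeaklyRegular (L i) rs) {s : L 0} (hs : s ∉ LinearMap.range (d 0))
    (hsJ : ∀ r ∈ rs, r • s ∈ LinearMap.range (d 0)) : Nontrivial (L rs.length) := by
  induction rs generalizing L with
  | nil => exact ⟨s, 0, fun h => hs (h ▸ zero_mem _)⟩
  | cons x rs ih =>
    simp only [isWeaklyRegular_cons_iff, List.forall_mem_cons] at hrs hsJ
    obtain ⟨⟨v, hv⟩, hsJ⟩ := hsJ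
    have hdd (i : ℕ) (u : L (i + 2)) : d i (d (i + 1) u) = 0 := (hd i).apply_apply_eq_zero u
    have : Nontrivial (QuotSMulTop x (L (rs.length + 1))) := by
      refine ih (L := fun i => QuotSMulTop x (L (i + 1)))
        (d := fun i => QuotSMulTop.map x (d (i + 1))) (s := Submodule.Quotient.mk v)
        (exact_quotSMulTopMap_succ hd fun i => (hrs i).1) (fun i => (hrs (i + 1)).2) ?_ ?_
      · rw [mk_mem_range_quotSMulTopMap_iff]
        rintro ⟨u, w, rfl⟩
        rw [map_add, hdd, zero_add, map_smul] at hv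
        exact hs ⟨w, (hrs 0).1 hv⟩
      · intro r hr
        obtain ⟨u, hu⟩ := hsJ r hr
        have hcycle : d 0 (r • v - x • u) = 0 := by
          rw [map_sub, map_smul, map_smul, hv, hu, smul_comm, sub_self]
        obtain ⟨w, hw⟩ := (hd 0 _).1 hcycle
        rw [← Submodule.Quotient.mk_smul, mk_mem_range_quotSMulTopMap_iff]
        exact ⟨w, u, by rw [hw, sub_add_cancel]⟩
    exact (Submodule.mkQ_surjective (x • (⊤ : Submodule R (L (rs.length + 1))))).nontrivial

theorem range_quotSMulTopMap_le {A B : Type*} [AddCommGroup A] [Module R A]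
    [AddCommGroup B] [Module R B] {f : A →ₗ[R] B} {x : R} {rs : List R}
    (hf : LinearMap.range f ≤ ofList (x :: rs) • (⊤ : Submodule R B)) :
    LinearMap.range (QuotSMulTop.map x f) ≤
      ofList rs • (⊤ : Submodule R (QuotSMulTop x B)) := by
  rintro _ ⟨a, rfl⟩
  obtain ⟨a, rfl⟩ := Submodule.Quotient.mk_surjective _ a
  have ha := hf ⟨a, rfl⟩
  rw [Ideal.ofList_cons_smul, Submodule.mem_sup] at ha
  obtain ⟨y, hy, z, hz, hyz⟩ := ha
  have hmk : (Submodule.Quotient.mk (f a) : QuotSMulTop x B) = Submodule.Quotient.mk z := by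
    rw [Submodule.Quotient.eq, ← hyz, add_sub_cancel_right]
    exact hy
  rw [QuotSMulTop.map_apply_mk, hmk]
  exact Submodule.smul_top_le_comap_smul_top _ (Submodule.mkQ _) hz

theorem top_eq_ofList_smul_top_of_isWeaklyRegular {rs : List R}
    (hd : ∀ i, Function.Exact (d (i + 1)) (d i)) (hrs : ∀ i, IsWeaklyRegular (L i) rs)
    (hmin : ∀ i, LinearMap.range (d i) ≤ ofList rs • (⊤ : Submodule R (L i))) :
    (⊤ : Submodule R (L (rs.length + 1))) = ofList rs • ⊤ := by
  induction rs generalizing L with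
  | nil =>
    refine le_antisymm (fun z _ => hmin 1 ((hd 0 z).1 ?_)) le_top
    simpa using hmin 0 ⟨z, rfl⟩
  | cons x rs ih =>
    simp only [isWeaklyRegular_cons_iff] at hrs
    exact (Submodule.top_eq_ofList_cons_smul_iff x rs).2 <|
      ih (L := fun i => QuotSMulTop x (L (i + 1))) (d := fun i => QuotSMulTop.map x (d (i + 1)))
        (exact_quotSMulTopMap_succ hd fun i => (hrs i).1) (fun i => (hrs (i + 1)).2)
        fun i => range_quotSMulTopMap_le (hmin (i + 1))

theorem nontrivial_of_isWeaklyRegular_of_torsionBySet_ne_bot {rs : List R}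
    (hd : ∀ i, Function.Exact (d (i + 1)) (d i)) (hrs : ∀ i, IsWeaklyRegular (L i) rs)
    {N : Type*} [AddCommGroup N] [Module R N] {a : L 0 →ₗ[R] N} (ha : Function.Surjective a)
    (hda : Function.Exact (d 0) a) (hN : Submodule.torsionBySet R N (ofList rs) ≠ ⊥) :
    Nontrivial (L rs.length) := by
  obtain ⟨t, ht, ht0⟩ := (Submodule.ne_bot_iff _).1 hN
  obtain ⟨s, rfl⟩ := ha t
  refine nontrivial_of_isWeaklyRegular hd hrs (s := s) (fun hs => ht0 ((hda s).2 hs)) fun r hr => ?_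
  refine (hda _).1 ?_
  rw [map_smul]
  exact (Submodule.mem_torsionBySet_iff _ _).1 ht ⟨r, subset_span hr⟩

theorem subsingleton_of_isWeaklyRegular {rs : List R}
    (hd : ∀ i, Function.Exact (d (i + 1)) (d i)) (hrs : ∀ i, IsWeaklyRegular (L i) rs)
    (hmin : ∀ i, LinearMap.range (d i) ≤ ofList rs • (⊤ : Submodule R (L i)))
    [Module.Free R (L (rs.length + 1))] (hne : ofList rs ≠ ⊤) :
    Subsingleton (L (rs.length + 1)) := by
  by_contra hL
  rw [not_subsingleton_iff_nontrivial] at hL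
  exact ((Module.FaithfullyFlat.iff_flat_and_proper_ideal R _).1 inferInstance).2 _ hne
    (top_eq_ofList_smul_top_of_isWeaklyRegular hd hrs hmin).symm

end RegularSequence

section Torsion

open Submodule

variable {R M : Type*} [CommRing R] [AddCommGroup M] [Module R M] {J : Ideal R}

theorem torsionBySet_ideal_pow_eq_bot (hJ : torsionBySet R M J = ⊥) (c : ℕ) :
    torsionBySet R M ((J ^ c : Ideal R) : Set R) = ⊥ := by
  induction c with
  | zero => rw [pow_zero, Ideal.one_eq_top, Submodule.top_coe, torsionBySet_univ]
  | succ c ih =>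
    rw [eq_bot_iff] at hJ ih ⊢
    intro y hy
    refine ih ((mem_torsionBySet_iff _ _).2 fun a => hJ ((mem_torsionBySet_iff _ _).2 fun r => ?_))
    rw [← mul_smul]
    exact (mem_torsionBySet_iff _ _).1 hy ⟨r * a, pow_succ' J c ▸ Ideal.mul_mem_mul r.2 a.2⟩

theorem torsionBySet_ne_bot_of_pow_le_annihilator [Nontrivial M] {c : ℕ}
    (hc : J ^ c ≤ Module.annihilator R M) : torsionBySet R M J ≠ ⊥ := by
  intro hJ
  obtain ⟨y, hy⟩ := exists_ne (0 : M)
  have hmem : y ∈ torsionBySet R M ((J ^ c : Ideal R) : Set R) :=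
    (mem_torsionBySet_iff _ _).2 fun a => Module.mem_annihilator.1 (hc a.2) y
  rw [torsionBySet_ideal_pow_eq_bot hJ] at hmem
  exact hy hmem

theorem ne_top_of_torsionBySet_ne_bot (hJ : torsionBySet R M J ≠ ⊥) : J ≠ ⊤ := by
  rintro rfl
  exact hJ (by rw [Submodule.top_coe, torsionBySet_univ])

theorem not_injective_rTensor_of_range_le_smul_top {F G : Type*} [AddCommGroup F] [Module R F]
    [Module.FaithfullyFlat R F] [AddCommGroup G] [Module R G] {f : F →ₗ[R] G}
    (hf : LinearMap.range f ≤ J • (⊤ : Submodule R G)) (hM : torsionBySet R M J ≠ ⊥) :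
    ¬ Function.Injective (f.rTensor M) := by
  obtain ⟨t, ht, ht0⟩ := (Submodule.ne_bot_iff _).1 hM
  have htmul_of_mem (g : G) (hg : g ∈ J • (⊤ : Submodule R G)) : g ⊗ₜ[R] t = 0 := by
    induction hg using Submodule.smul_induction_on' with
    | smul r hr g _ =>
      rw [smul_tmul, (mem_torsionBySet_iff _ _).1 ht ⟨r, hr⟩, tmul_zero]
    | add x _ y _ hx hy => rw [add_tmul, hx, hy, add_zero]
  intro hinj
  have htmul (y : F) : y ⊗ₜ[R] t = 0 :=
    hinj (by rw [LinearMap.rTensor_tmul, htmul_of_mem _ (hf ⟨y, rfl⟩), map_zero])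
  have hzero : (LinearMap.toSpanSingleton R M t).lTensor F = 0 := by
    ext y
    simpa using htmul y
  refine ht0 ?_
  rw [← LinearMap.toSpanSingleton_apply_one R M t,
    (Module.FaithfullyFlat.zero_iff_lTensor_zero R F _).2 hzero, LinearMap.zero_apply]

end Torsion

section DimensionShifting

universe v

variable {R : Type*} [CommRing R]

theorem rTensor_lTensor_comm {A B C D : Type*} [AddCommGroup A] [Module R A]
    [AddCommGroup B] [Module R B] [AddCommGroup C] [Module R C] [AddCommGroup D] [Module R D]
    (f : A →ₗ[R] B) (p : C →ₗ[R] D) (z : A ⊗[R] C) :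
    f.rTensor D (p.lTensor A z) = p.lTensor B (f.rTensor C z) := by
  simp only [← LinearMap.comp_apply, LinearMap.lTensor_comp_rTensor, LinearMap.rTensor_comp_lTensor]

section

variable {A F B P₀ P₁ P₂ Q : Type*}
  [AddCommGroup A] [Module R A] [AddCommGroup F] [Module R F] [AddCommGroup B] [Module R B]
  [AddCommGroup P₀] [Module R P₀] [AddCommGroup P₁] [Module R P₁]
  [AddCommGroup P₂] [Module R P₂] [AddCommGroup Q] [Module R Q]
  [Module.Flat R F] [Module.Flat R P₀]
  {f : A →ₗ[R] F} {g : F →ₗ[R] B} {p₂ : P₂ →ₗ[R] P₁} {p₁ : P₁ →ₗ[R] P₀} {q : P₀ →ₗ[R] Q}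

theorem mem_range_lTensor_of_exact_lTensor (hf : Function.Injective f)
    (hg : Function.Surjective g) (hfg : Function.Exact f g) (hp : p₁ ∘ₗ p₂ = 0)
    (hpq : Function.Exact p₁ q) (hB : Function.Exact (p₂.lTensor B) (p₁.lTensor B))
    {z : A ⊗[R] P₀} (hz : f.rTensor Q (q.lTensor A z) = 0) :
    z ∈ LinearMap.range (p₁.lTensor A) := by
  obtain ⟨y, hy⟩ : ∃ y, p₁.lTensor F y = f.rTensor P₀ z :=
    (Module.Flat.lTensor_exact F hpq _).1 (by rw [← rTensor_lTensor_comm, hz])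
  obtain ⟨w, hw⟩ : ∃ w, p₂.lTensor B (g.rTensor P₂ w) = g.rTensor P₁ y := by
    have hgy : p₁.lTensor B (g.rTensor P₁ y) = 0 := by
      rw [← rTensor_lTensor_comm, hy, (rTensor_exact P₀ hfg hg).apply_apply_eq_zero]
    obtain ⟨w, hw⟩ := (hB _).1 hgy
    obtain ⟨w, rfl⟩ := LinearMap.rTensor_surjective P₂ hg w
    exact ⟨w, hw⟩
  obtain ⟨u, hu⟩ : ∃ u, f.rTensor P₁ u = y - p₂.lTensor F w :=
    (rTensor_exact P₁ hfg hg _).1 (by rw [map_sub, rTensor_lTensor_comm, hw, sub_self])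
  refine ⟨u, Module.Flat.rTensor_preserves_injective_linearMap (M := P₀) f hf ?_⟩
  have hpp : p₁.lTensor F (p₂.lTensor F w) = 0 := by
    rw [← LinearMap.lTensor_comp_apply, hp, LinearMap.lTensor_zero, LinearMap.zero_apply]
  rw [rTensor_lTensor_comm, hu, map_sub, hy, hpp, sub_zero]

theorem exact_lTensor_of_exact_lTensor_cokernel (hf : Function.Injective f)
    (hg : Function.Surjective g) (hfg : Function.Exact f g) (hp : p₁ ∘ₗ p₂ = 0)
    (hpq : Function.Exact p₁ q) (hB : Function.Exact (p₂.lTensor B) (p₁.lTensor B)) :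
    Function.Exact (p₁.lTensor A) (q.lTensor A) := by
  refine LinearMap.exact_of_comp_of_mem_range ?_ fun z hz =>
    mem_range_lTensor_of_exact_lTensor hf hg hfg hp hpq hB (by rw [hz, map_zero])
  rw [← LinearMap.lTensor_comp, hpq.linearMap_comp_eq_zero, LinearMap.lTensor_zero]

theorem injective_rTensor_of_exact_lTensor_cokernel (hf : Function.Injective f)
    (hg : Function.Surjective g) (hfg : Function.Exact f g) (hp : p₁ ∘ₗ p₂ = 0)
    (hpq : Function.Exact p₁ q) (hq : Function.Surjective q)
    (hB : Function.Exact (p₂.lTensor B) (p₁.lTensor B)) :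
    Function.Injective (f.rTensor Q) := by
  rw [injective_iff_map_eq_zero]
  intro z hz
  obtain ⟨z, rfl⟩ := LinearMap.lTensor_surjective A hq z
  obtain ⟨u, rfl⟩ := mem_range_lTensor_of_exact_lTensor hf hg hfg hp hpq hB hz
  rw [← LinearMap.lTensor_comp_apply, hpq.linearMap_comp_eq_zero, LinearMap.lTensor_zero,
    LinearMap.zero_apply]

end

theorem injective_rTensor_of_exact_lTensor {L : ℕ → Type v} [∀ i, AddCommGroup (L i)]
    [∀ i, Module R (L i)] [∀ i, Module.Flat R (L i)] {d : ∀ i, L (i + 1) →ₗ[R] L i}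
    (hd : ∀ i, Function.Exact (d (i + 1)) (d i))
    {P : ℕ → Type*} [∀ i, AddCommGroup (P i)] [∀ i, Module R (P i)] [∀ i, Module.Flat R (P i)]
    {p : ∀ i, P (i + 1) →ₗ[R] P i} (hp : ∀ i, Function.Exact (p (i + 1)) (p i))
    {N : Type v} {M : Type*} [AddCommGroup N] [Module R N] [AddCommGroup M] [Module R M]
    {a : L 0 →ₗ[R] N} (ha : Function.Surjective a) (hda : Function.Exact (d 0) a)
    {q : P 0 →ₗ[R] M} (hq : Function.Surjective q) (hpq : Function.Exact (p 0) q) {n : ℕ}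
    (hT : Function.Exact ((p (n + 1)).lTensor N) ((p n).lTensor N))
    (hn : Function.Injective (d n)) : Function.Injective ((d n).rTensor M) := by
  induction n generalizing L N with
  | zero =>
    exact injective_rTensor_of_exact_lTensor_cokernel hn ha hda (hp 0).linearMap_comp_eq_zero
      hpq hq hT
  | succ n ih =>
    have hsyzygy : Function.Exact ((p (n + 1)).lTensor (LinearMap.range (d 0)))
        ((p n).lTensor (LinearMap.range (d 0))) :=
      exact_lTensor_of_exact_lTensor_cokernel (Submodule.subtype_injective _) ha
        (LinearMap.exact_iff.2 (by rw [Submodule.range_subtype, hda.linearMap_ker_eq]))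
        (hp (n + 1)).linearMap_comp_eq_zero (hp n) hT
    exact ih (L := fun i => L (i + 1)) (d := fun i => d (i + 1)) (fun i => hd (i + 1))
      (LinearMap.surjective_rangeRestrict (d 0))
      (LinearMap.exact_iff.2 (by rw [← (hd 0).linearMap_ker_eq, LinearMap.ker_rangeRestrict]))
      hsyzygy hn

end DimensionShifting

section Tor

universe u

variable {R : Type u} [CommRing R] {N M : Type u} [AddCommGroup N] [Module R N]
  [AddCommGroup M] [Module R M]

theorem exact_lTensor_of_subsingleton_tor (P : ProjectiveResolution (ModuleCat.of R M)) {n : ℕ}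
    (hT : Subsingleton
      (((Tor (ModuleCat R) (n + 1)).obj (ModuleCat.of R N)).obj (ModuleCat.of R M))) :
    Function.Exact ((P.complex.d (n + 2) (n + 1)).hom.lTensor N)
      ((P.complex.d (n + 1) n).hom.lTensor N) := by
  let F := (MonoidalCategory.tensoringLeft (ModuleCat R)).obj (ModuleCat.of R N)
  have hF : Limits.IsZero ((F.leftDerived (n + 1)).obj (ModuleCat.of R M)) :=
    @ModuleCat.isZero_of_subsingleton _ _ _ hT
  have hexact : ((F.mapHomologicalComplex _).obj P.complex).ExactAt (n + 1) := by
    rw [HomologicalComplex.exactAt_iff_isZero_homology]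
    exact hF.of_iso (P.isoLeftDerivedObj F (n + 1)).symm
  rw [HomologicalComplex.exactAt_iff' _ (n + 2) (n + 1) n (by simp) (by simp)] at hexact
  exact (ShortComplex.ShortExact.moduleCat_exact_iff_function_exact _).1 hexact

variable {L : ℕ → Type u} [∀ i, AddCommGroup (L i)] [∀ i, Module R (L i)]
  {d : ∀ i, L (i + 1) →ₗ[R] L i} {a : L 0 →ₗ[R] N}

theorem injective_rTensor_of_subsingleton_tor [∀ i, Module.Flat R (L i)]
    (hd : ∀ i, Function.Exact (d (i + 1)) (d i)) (ha : Function.Surjective a)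
    (hda : Function.Exact (d 0) a) {n : ℕ}
    (hT : Subsingleton
      (((Tor (ModuleCat R) (n + 1)).obj (ModuleCat.of R N)).obj (ModuleCat.of R M)))
    (hn : Function.Injective (d n)) : Function.Injective ((d n).rTensor M) := by
  let P := projectiveResolution (ModuleCat.of R M)
  have (i : ℕ) : Module.Projective R (P.complex.X i) :=
    (IsProjective.iff_projective _).2 (P.projective i)
  have hπ : (ShortComplex.mk _ _ P.complex_d_comp_π_f_zero).Exact :=
    ShortComplex.exact_of_g_is_cokernel _ P.isColimitCokernelCofork
  exact injective_rTensor_of_exact_lTensor (P := fun i => P.complex.X i)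
    (p := fun i => (P.complex.d (i + 1) i).hom) hd
    (fun i => (ShortComplex.ShortExact.moduleCat_exact_iff_function_exact _).1 (P.exact_succ i))
    ha hda ((ModuleCat.epi_iff_surjective (P.π.f 0)).1 inferInstance)
    ((ShortComplex.ShortExact.moduleCat_exact_iff_function_exact _).1 hπ)
    (exact_lTensor_of_subsingleton_tor P hT) hn

theorem top_tor_nonvanishing_general [∀ i, Module.Free R (L i)] {rs : List R} {J : Ideal R}
    (hrs : RingTheory.Sequence.IsWeaklyRegular R rs) (hJ : Ideal.ofList rs = J) {n : ℕ}
    (hn : rs.length = n + 1) (hN : Submodule.torsionBySet R N J ≠ ⊥)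
    (hM : Submodule.torsionBySet R M J ≠ ⊥) (ha : Function.Surjective a)
    (hda : Function.Exact (d 0) a) (hd : ∀ i, Function.Exact (d (i + 1)) (d i))
    (hmin : ∀ i, LinearMap.range (d i) ≤ J • (⊤ : Submodule R (L i))) :
    ¬ Function.Injective ((d n).rTensor M) ∧
    Nontrivial (((Tor (ModuleCat R) (n + 1)).obj (ModuleCat.of R N)).obj (ModuleCat.of R M)) := by
  subst hJ
  have hL (i : ℕ) := isWeaklyRegular_of_flat hrs (L i)
  have hnontrivial : Nontrivial (L (n + 1)) :=
    hn ▸ nontrivial_of_isWeaklyRegular_of_torsionBySet_ne_bot hd hL ha hda hN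
  have hsubsingleton : Subsingleton (L (n + 1 + 1)) :=
    hn ▸ subsingleton_of_isWeaklyRegular hd hL hmin (ne_top_of_torsionBySet_ne_bot hM)
  have hinjective : Function.Injective (d n) :=
    (injective_iff_map_eq_zero _).2 fun z hz => by
      obtain ⟨w, rfl⟩ := (hd n z).1 hz
      rw [Subsingleton.elim w 0, map_zero]
  have hrTensor := not_injective_rTensor_of_range_le_smul_top (hmin n) hM
  refine ⟨hrTensor, not_subsingleton_iff_nontrivial.1 fun hT => hrTensor ?_⟩
  exact injective_rTensor_of_subsingleton_tor hd ha hda hT hinjective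

end Tor

section Variables

open MvPolynomial RingTheory.Sequence

variable {σ A : Type*} [CommRing A]

theorem mem_ideal_span_X_image_of_X_mul_mem {s : Set σ} {i : σ} (hi : i ∉ s)
    {p : MvPolynomial σ A} (hp : X i * p ∈ Ideal.span (X '' s : Set (MvPolynomial σ A))) :
    p ∈ Ideal.span (X '' s : Set (MvPolynomial σ A)) := by
  rw [mem_ideal_span_X_image] at hp ⊢
  intro m hm
  obtain ⟨j, hj, hmj⟩ := hp (Finsupp.single i 1 + m) (by
    rwa [mem_support_iff, coeff_X_mul, ← mem_support_iff])
  have hij : i ≠ j := fun h => hi (h ▸ hj)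
  exact ⟨j, hj, by simpa [Finsupp.single_apply, hij] using hmj⟩

theorem ofList_map_X (l : List σ) :
    Ideal.ofList (l.map X : List (MvPolynomial σ A)) = Ideal.span (X '' {i | i ∈ l}) := by
  simp only [Ideal.ofList, List.mem_map, Set.image, Set.mem_ofPred_eq]

theorem isWeaklyRegular_map_X {l : List σ} (hl : l.Nodup) :
    IsWeaklyRegular (MvPolynomial σ A) (l.map X : List (MvPolynomial σ A)) := by
  induction l using List.reverseRecOn with
  | nil => exact .nil _ _
  | append_singleton l i ih =>
    rw [List.nodup_append_comm, List.singleton_append, List.nodup_cons] at hl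
    rw [List.map_append, isWeaklyRegular_append_iff]
    refine ⟨ih hl.2, ?_⟩
    rw [List.map_singleton, isWeaklyRegular_singleton_iff,
      isSMulRegular_quotient_iff_mem_of_smul_mem, smul_eq_mul, Ideal.mul_top, ofList_map_X]
    exact fun p => mem_ideal_span_X_image_of_X_mul_mem (s := {j | j ∈ l}) hl.1

theorem ofList_map_X_finRange (K : Type) [Field K] (n : ℕ) :
    Ideal.ofList ((List.finRange (n + 1)).map X) = irrel K n := by
  simp [ofList_map_X, irrel]

end Variables

theorem torsionBySet_irrel_ne_bot {K : Type} [Field K] {n : ℕ} {M : Type} [AddCommGroup M]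
    [Module (PolyS K n) M] [Nontrivial M] (hM : IsGradedFiniteLength K n M) :
    Submodule.torsionBySet (PolyS K n) M (irrel K n) ≠ ⊥ :=
  let ⟨_, _, hc⟩ := hM
  torsionBySet_ne_bot_of_pow_le_annihilator hc

/-- For nonzero finite length graded modules `N, M` over
`S = K[X₀,…,Xₙ]` and a minimal free resolution `0 → L_{n+1} → ⋯ → L₀ → N → 0`,
the map `L_{n+1} ⊗ M → L_n ⊗ M` is not injective; equivalently
`Tor_{n+1}^S(N,M) ≠ 0`. -/
theorem top_tor_nonvanishing
    (K : Type) [Field K] (n : ℕ)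
    (N M : Type) [AddCommGroup N] [Module (PolyS K n) N]
    [AddCommGroup M] [Module (PolyS K n) M]
    (hN : Nontrivial N) (hM : Nontrivial M)
    (hNfl : IsGradedFiniteLength K n N) (hMfl : IsGradedFiniteLength K n M)
    (res : MinimalResolution K n N) :
    ¬ Function.Injective (LinearMap.rTensor M (res.d n)) ∧
    Nontrivial (((Tor (ModuleCat (PolyS K n)) (n+1)).obj
      (ModuleCat.of (PolyS K n) N)).obj (ModuleCat.of (PolyS K n) M)) := by
  have := res.free
  exact top_tor_nonvanishing_general (isWeaklyRegular_map_X (List.nodup_finRange _))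
    (ofList_map_X_finRange K n) (by simp) (torsionBySet_irrel_ne_bot hNfl)
    (torsionBySet_irrel_ne_bot hMfl) res.aug_surjective (LinearMap.exact_iff.2 res.exact0.symm)
    (fun i => LinearMap.exact_iff.2 (res.exact i).symm) res.minimal
end
end

section
/- Let E be a rank two vector bundle on P^n arising from a monad 0 → A → P → B → 0 with A, B free, and suppose H^l_*(E) = 0 for some l with 2 ≤ l ≤ n-2. Then H^l_*(Λ²P) = 0. -/
/-!
Background setup (the paper works on projective space `ℙⁿ` over a field `K`):
we encode a coherent sheaf on `ℙⁿ_K` by a module `M` over the homogeneous coordinate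
ring `S = K[X₀,…,Xₙ]` (namely `M = Γ_*` of the sheaf), and the intermediate cohomology
module `H^i_*(F) = ⊕_ν H^i(ℙⁿ, F(ν))` (for `i ≥ 1`) by the local cohomology module
`H^{i+1}_𝔪(M)` at the irrelevant maximal ideal `𝔪 = (X₀,…,Xₙ)`, to which it is
canonically isomorphic.
-/

open CategoryTheory TensorProduct

noncomputable section

variable (K : Type) [Field K] (n : ℕ)

/-- The cohomology `ker β / im α` of a monad `A --α--> P --β--> B`. -/
def MonadHomology {R A P B : Type} [CommRing R] [AddCommGroup A] [Module R A]
    [AddCommGroup P] [Module R P] [AddCommGroup B] [Module R B]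
    (α : A →ₗ[R] P) (β : P →ₗ[R] B) : Type :=
  ↥(LinearMap.ker β) ⧸ (LinearMap.range α).comap (LinearMap.ker β).subtype

instance {R A P B : Type} [CommRing R] [AddCommGroup A] [Module R A]
    [AddCommGroup P] [Module R P] [AddCommGroup B] [Module R B]
    (α : A →ₗ[R] P) (β : P →ₗ[R] B) : AddCommGroup (MonadHomology α β) := by
  unfold MonadHomology; infer_instance

instance {R A P B : Type} [CommRing R] [AddCommGroup A] [Module R A]
    [AddCommGroup P] [Module R P] [AddCommGroup B] [Module R B]
    (α : A →ₗ[R] P) (β : P →ₗ[R] B) : Module R (MonadHomology α β) := by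
  unfold MonadHomology; infer_instance

/-- A linear map of `S`-modules which becomes an isomorphism of the associated sheaves
on `ℙⁿ`: its kernel and cokernel are annihilated by a power of the irrelevant ideal. -/
def IsSheafIso {M N' : Type} [AddCommGroup M] [Module (PolyS K n) M]
    [AddCommGroup N'] [Module (PolyS K n) N'] (f : M →ₗ[PolyS K n] N') : Prop :=
  (∃ c : ℕ, (irrel K n) ^ c ≤ Module.annihilator (PolyS K n) ↥(LinearMap.ker f)) ∧
  (∃ c : ℕ, (irrel K n) ^ c ≤ Module.annihilator (PolyS K n) (N' ⧸ LinearMap.range f))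

/-!
Let `J` be the irrelevant ideal. Off `V(J)` a monad gives two locally split sequences,
`A → ker β → E` and `ker β → P → B`. A locally split sequence `M' → M → N` filters `⋀² M` with
graded pieces `⋀² M'`, `M' ⊗ N` and `⋀² N`, and in degrees at least `2` local cohomology ignores
modules killed by a power of `J`, so vanishing for `⋀² P` follows from vanishing for
`⋀² A`, `A ⊗ E`, `⋀² E`, `ker β ⊗ B` and `⋀² B`. Tensoring with a free module only takes copies,
which disposes of `A ⊗ E` and of `ker β ⊗ B`, and the free modules `⋀² A`, `⋀² B` have no
intermediate cohomology. Finally `⋀² E` is a line bundle off `V(J)`, and line bundles on the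
punctured spectrum of a factorial ring are trivial, so it too has no intermediate cohomology.
-/

universe u

section DerivedExt

open Opposite

variable {R : Type*} [CommRing R] {C : Type*} [Category* C] [Abelian C] [Linear R C]
  {X X' Y : C}

/-- The complex `Hom(P_•, Y)`, as a chain complex in the opposite category: its homology is
the derived functor `Ext R C`. -/
abbrev homComplex (R : Type*) [CommRing R] [Linear R C] (P : ProjectiveResolution X) (Y : C) :
    HomologicalComplex (ModuleCat R)ᵒᵖ (ComplexShape.down ℕ) :=
  (((linearYoneda R C).obj Y).rightOp.mapHomologicalComplex _).obj P.complex

lemma homComplex_pOpcycles_unop_injective (P : ProjectiveResolution X) (i : ℕ) :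
    Function.Injective ((homComplex R P Y).pOpcycles i).unop := by
  rw [← ModuleCat.mono_iff_injective]
  infer_instance

variable [EnoughProjectives C]

/-- The element `x` of the derived functor `Ext R C i` is the class of the cocycle
`f : P_i ⟶ Y`. -/
def IsClassOf (P : ProjectiveResolution X) {i : ℕ} (f : P.complex.X i ⟶ Y)
    (x : ((Ext R C i).obj (op X)).obj Y) : Prop :=
  ∃ z : ((homComplex R P Y).opcycles i).unop,
    ((homComplex R P Y).pOpcycles i).unop z = f ∧
    (P.isoLeftDerivedObj ((linearYoneda R C).obj Y).rightOp i).hom.unop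
      (((homComplex R P Y).homologyι i).unop z) = x

lemma exists_isClassOf (P : ProjectiveResolution X) {i : ℕ} (f : P.complex.X i ⟶ Y)
    (hf : P.complex.d (i + 1) i ≫ f = 0) :
    ∃ x : ((Ext R C i).obj (op X)).obj Y, IsClassOf P f x := by
  have hexact : (ShortComplex.mk ((homComplex R P Y).d (i + 1) i)
      ((homComplex R P Y).pOpcycles i) ((homComplex R P Y).d_pOpcycles (i + 1) i)).Exact :=
    ShortComplex.exact_of_g_is_cokernel _
      ((homComplex R P Y).opcyclesIsCokernel (i + 1) i (by simp))
  obtain ⟨z, hz⟩ := (ShortComplex.moduleCat_exact_iff _).1 hexact.unop f hf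
  exact ⟨_, z, hz, rfl⟩

lemma exists_cocycle_isClassOf (P : ProjectiveResolution X) {i : ℕ}
    (x : ((Ext R C i).obj (op X)).obj Y) :
    ∃ f : P.complex.X i ⟶ Y, P.complex.d (i + 1) i ≫ f = 0 ∧ IsClassOf P f x := by
  obtain ⟨y, rfl⟩ := (ModuleCat.epi_iff_surjective
    (P.isoLeftDerivedObj ((linearYoneda R C).obj Y).rightOp i).hom.unop).1 inferInstance x
  obtain ⟨z, rfl⟩ := (ModuleCat.epi_iff_surjective
    ((homComplex R P Y).homologyι i).unop).1 inferInstance y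
  exact ⟨((homComplex R P Y).pOpcycles i).unop z,
    ConcreteCategory.congr_hom
      (congrArg Quiver.Hom.unop ((homComplex R P Y).d_pOpcycles (i + 1) i)) z, z, rfl, rfl⟩

lemma IsClassOf.map {P : ProjectiveResolution X} {P' : ProjectiveResolution X'} {i : ℕ}
    {f : P.complex.X i ⟶ Y} {x : ((Ext R C i).obj (op X)).obj Y} (h : IsClassOf P f x)
    {g : X' ⟶ X} (φ : P'.complex ⟶ P.complex) (comm : φ.f 0 ≫ P.π.f 0 = P'.π.f 0 ≫ g) :
    IsClassOf P' (φ.f i ≫ f) (((Ext R C i).map g.op).app Y x) := by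
  obtain ⟨z, rfl, rfl⟩ := h
  let Φ : homComplex R P' Y ⟶ homComplex R P Y :=
    (((linearYoneda R C).obj Y).rightOp.mapHomologicalComplex _).map φ
  refine ⟨(HomologicalComplex.opcyclesMap Φ i).unop z, ?_, ?_⟩
  · exact ConcreteCategory.congr_hom
      (congrArg Quiver.Hom.unop (HomologicalComplex.p_opcyclesMap Φ i)) z
  · have hι := ConcreteCategory.congr_hom
      (congrArg Quiver.Hom.unop (HomologicalComplex.homologyι_naturality Φ i)) z
    have hiso := ConcreteCategory.congr_hom (congrArg Quiver.Hom.unop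
      (ProjectiveResolution.isoLeftDerivedObj_hom_naturality g P' P φ comm
        ((linearYoneda R C).obj Y).rightOp i)) (((homComplex R P Y).homologyι i).unop z)
    exact Eq.trans (congrArg
      (P'.isoLeftDerivedObj ((linearYoneda R C).obj Y).rightOp i).hom.unop hι.symm) hiso.symm

lemma IsClassOf.eq_zero_iff {P : ProjectiveResolution X} {i : ℕ}
    {f : P.complex.X (i + 1) ⟶ Y} {x : ((Ext R C (i + 1)).obj (op X)).obj Y}
    (h : IsClassOf P f x) :
    x = 0 ↔ ∃ g : P.complex.X i ⟶ Y, P.complex.d (i + 1) i ≫ g = f := by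
  obtain ⟨z, rfl, rfl⟩ := h
  let T := homComplex R P Y
  let e := (P.isoLeftDerivedObj ((linearYoneda R C).obj Y).rightOp (i + 1)).hom.unop
  have e_injective : Function.Injective e :=
    (ModuleCat.mono_iff_injective e).1 inferInstance
  have hexact : (ShortComplex.mk (T.homologyι (i + 1)) (T.fromOpcycles (i + 1) i)
      (by simp)).Exact :=
    ShortComplex.exact_of_f_is_kernel _ (T.homologyIsKernel (i + 1) i (by simp))
  have coboundary (g : P.complex.X i ⟶ Y) :
      (T.pOpcycles (i + 1)).unop ((T.fromOpcycles (i + 1) i).unop g) =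
        P.complex.d (i + 1) i ≫ g :=
    ConcreteCategory.congr_hom (congrArg Quiver.Hom.unop (T.p_fromOpcycles (i + 1) i)) g
  constructor
  · intro hx
    obtain ⟨g, hg⟩ := (ShortComplex.moduleCat_exact_iff _).1 hexact.unop z
      (e_injective (hx.trans (map_zero e.hom).symm))
    exact ⟨g, (coboundary g).symm.trans (congrArg _ hg)⟩
  · rintro ⟨g, hg⟩
    obtain rfl : (T.fromOpcycles (i + 1) i).unop g = z :=
      homComplex_pOpcycles_unop_injective P (i + 1) ((coboundary g).trans hg)
    have hzero := ConcreteCategory.congr_hom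
      (congrArg Quiver.Hom.unop (T.homologyι_comp_fromOpcycles (i + 1) i)) g
    exact (congrArg e hzero).trans (map_zero e.hom)

/-- Compares the derived functor `Ext R C` on the left with `Abelian.Ext` on the right. -/
lemma IsClassOf.map_eq_zero_iff [HasExt C] {P : ProjectiveResolution X} {i : ℕ}
    {f : P.complex.X (i + 1) ⟶ Y} {x : ((Ext R C (i + 1)).obj (op X)).obj Y}
    (h : IsClassOf P f x) (hf : P.complex.d (i + 1 + 1) (i + 1) ≫ f = 0) (g : X' ⟶ X) :
    ((Ext R C (i + 1)).map g.op).app Y x = 0 ↔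
      (Abelian.Ext.mk₀ g).comp (P.extMk f _ rfl hf) (zero_add _) = 0 := by
  let P' := projectiveResolution X'
  let φ := ProjectiveResolution.lift g P' P
  have comm : φ.f 0 ≫ P.π.f 0 = P'.π.f 0 ≫ g := ProjectiveResolution.lift_commutes_zero g P' P
  let φ' : ProjectiveResolution.Hom P' P g := ⟨φ, by simpa using comm⟩
  rw [(h.map φ comm).eq_zero_iff, ProjectiveResolution.mk₀_comp_extMk f _ rfl hf φ',
    ProjectiveResolution.extMk_eq_zero_iff _ _ _ _ _ i rfl]

end DerivedExt

section LocalCohomology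

open Limits Opposite

variable {R : Type u} [CommRing R]

/-- The projection `R ⧸ J ^ t ⟶ R ⧸ J ^ s` for `s ≤ t`. -/
abbrev quotientPowProj (J : Ideal R) {s t : ℕ} (h : s ≤ t) :
    ModuleCat.of R (R ⧸ J ^ t) ⟶ ModuleCat.of R (R ⧸ J ^ s) :=
  ModuleCat.ofHom (Submodule.mapQ (J ^ t) (J ^ s) LinearMap.id (Ideal.pow_le_pow_right h))

lemma subsingleton_localCohomology_iff (J : Ideal R) (i : ℕ) (M : ModuleCat.{u} R) :
    Subsingleton ((localCohomology J i).obj M) ↔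
      ∀ (s : ℕ) (x : ((Ext R (ModuleCat.{u} R) i).obj (op (.of R (R ⧸ J ^ s)))).obj M),
        ∃ (t : ℕ) (h : s ≤ t),
          ((Ext R (ModuleCat.{u} R) i).map (quotientPowProj J h).op).app M x = 0 := by
  let D := localCohomology.diagram (localCohomology.idealPowersDiagram J) i ⋙
    (evaluation _ _).obj M
  let c := ((evaluation _ _).obj M).mapCocone (colimit.cocone
    (localCohomology.diagram (localCohomology.idealPowersDiagram J) i))
  have := preservesFilteredColimitsOfSize_shrink.{0, u, 0, u} (forget (ModuleCat.{u} R))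
  have hc : IsColimit c := isColimitOfPreserves ((evaluation _ _).obj M) (colimit.isColimit _)
  constructor
  · intro _ s x
    have hx : c.ι.app (op (op s)) (show ToType (D.obj (op (op s))) from x) =
        c.ι.app (op (op s)) (0 : ToType (D.obj (op (op s)))) :=
      Subsingleton.elim (α := (localCohomology J i).obj M) _ _
    obtain ⟨t, f, g, hfg⟩ := (Concrete.isColimit_rep_eq_iff_exists _ hc _ _).1 hx
    exact ⟨t.unop.unop, f.unop.unop.down.down, Eq.trans hfg (map_zero (D.map g).hom)⟩
  · refine fun H ↦ subsingleton_of_forall_eq (α := c.pt) 0 fun y ↦ ?_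
    obtain ⟨j, x, rfl⟩ := Concrete.isColimit_exists_rep _ hc y
    obtain ⟨t, h, hx⟩ := H j.unop.unop x
    let g : j ⟶ op (op t) := (homOfLE h).op.op
    have hx : D.map g x = 0 := hx
    rw [← c.w g, ConcreteCategory.comp_apply, hx, map_zero]

/-- `H^i_J(M) = 0`. -/
def LocalCohomologyVanishes (J : Ideal R) (i : ℕ) (M : Type u) [AddCommGroup M] [Module R M] :
    Prop :=
  Subsingleton ((localCohomology J i).obj (ModuleCat.of R M))

variable {J : Ideal R} {i : ℕ} {M N Q : Type u} [AddCommGroup M] [Module R M] [AddCommGroup N]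
  [Module R N] [AddCommGroup Q] [Module R Q]

lemma localCohomologyVanishes_succ_iff :
    LocalCohomologyVanishes J (i + 1) M ↔
      ∀ (s : ℕ) (x : Abelian.Ext (ModuleCat.of R (R ⧸ J ^ s)) (.of R M) (i + 1)),
        ∃ (t : ℕ) (h : s ≤ t),
          (Abelian.Ext.mk₀ (quotientPowProj J h)).comp x (zero_add _) = 0 := by
  rw [LocalCohomologyVanishes, subsingleton_localCohomology_iff]
  refine forall_congr' fun s ↦ ?_
  let P := projectiveResolution (ModuleCat.of R (R ⧸ J ^ s))
  constructor
  · intro H x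
    obtain ⟨f, hf, rfl⟩ := P.extMk_surjective x (i + 1 + 1) rfl
    obtain ⟨x, hx⟩ := exists_isClassOf (R := R) P f hf
    obtain ⟨t, h, ht⟩ := H x
    exact ⟨t, h, (hx.map_eq_zero_iff hf _).1 ht⟩
  · intro H x
    obtain ⟨f, hf, hx⟩ := exists_cocycle_isClassOf P x
    obtain ⟨t, h, ht⟩ := H (P.extMk f _ rfl hf)
    exact ⟨t, h, (hx.map_eq_zero_iff hf _).2 ht⟩

end LocalCohomology

section LongExactSequence

open Abelian.Ext

variable {R : Type u} [CommRing R] {J : Ideal R} {i : ℕ} {M M' M'' N : Type u}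
  [AddCommGroup M] [Module R M] [AddCommGroup M'] [Module R M']
  [AddCommGroup M''] [Module R M''] [AddCommGroup N] [Module R N]

lemma LocalCohomologyVanishes.of_equiv (h : LocalCohomologyVanishes J i M) (e : M ≃ₗ[R] N) :
    LocalCohomologyVanishes J i N :=
  have : Subsingleton ((localCohomology J i).obj (ModuleCat.of R M)) := h
  ((localCohomology J i).mapIso e.toModuleIso).toLinearEquiv.symm.toEquiv.subsingleton

/-- The degrees of `a` and `b` are left open so that this covers all three exact spots of the long
exact sequence. -/
lemma localCohomologyVanishes_of_ext_exact {j k p q : ℕ}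
    (a : Abelian.Ext (ModuleCat.of R M') (ModuleCat.of R M) p)
    (b : Abelian.Ext (ModuleCat.of R M) (ModuleCat.of R M'') q) (hp : i + 1 + p = j + 1)
    (hq : j + 1 + q = k + 1)
    (hexact : ∀ (W : ModuleCat.{u} R) (y : Abelian.Ext W (ModuleCat.of R M) (j + 1)),
      y.comp b hq = 0 → ∃ x : Abelian.Ext W (ModuleCat.of R M') (i + 1), x.comp a hp = y)
    (h' : LocalCohomologyVanishes J (i + 1) M') (h'' : LocalCohomologyVanishes J (k + 1) M'') :
    LocalCohomologyVanishes J (j + 1) M := by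
  rw [localCohomologyVanishes_succ_iff] at *
  intro s y
  obtain ⟨t, hst, ht⟩ := h'' s (y.comp b hq)
  rw [← comp_assoc _ _ _ (zero_add _) hq (by omega)] at ht
  obtain ⟨x, hx⟩ := hexact _ _ ht
  obtain ⟨r, htr, hr⟩ := h' t x
  have proj_comp : quotientPowProj J (hst.trans htr) =
      quotientPowProj J htr ≫ quotientPowProj J hst := by
    ext
    rfl
  refine ⟨r, hst.trans htr, ?_⟩
  rw [proj_comp, ← mk₀_comp_mk₀, comp_assoc _ _ _ (zero_add _) (zero_add _) (by omega), ← hx,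
    ← comp_assoc _ _ _ (zero_add _) hp (by omega), hr, zero_comp]

section

variable {f : M' →ₗ[R] M} {g : M →ₗ[R] M''}

lemma shortExact_shortComplexOfCompEqZero (hf : Function.Injective f)
    (hfg : Function.Exact f g) (hg : Function.Surjective g) :
    (ModuleCat.shortComplexOfCompEqZero f g hfg.linearMap_comp_eq_zero).ShortExact :=
  ModuleCat.shortComplex_shortExact _ hfg hf hg

lemma LocalCohomologyVanishes.middle_of_exact (hf : Function.Injective f)
    (hfg : Function.Exact f g) (hg : Function.Surjective g)
    (h' : LocalCohomologyVanishes J (i + 1) M')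
    (h'' : LocalCohomologyVanishes J (i + 1) M'') : LocalCohomologyVanishes J (i + 1) M :=
  localCohomologyVanishes_of_ext_exact _ _ (add_zero _) (add_zero _)
    (fun W ↦ covariant_sequence_exact₂ W (shortExact_shortComplexOfCompEqZero hf hfg hg)) h' h''

lemma LocalCohomologyVanishes.right_of_exact (hf : Function.Injective f)
    (hfg : Function.Exact f g) (hg : Function.Surjective g)
    (h : LocalCohomologyVanishes J (i + 1) M)
    (h' : LocalCohomologyVanishes J (i + 2) M') : LocalCohomologyVanishes J (i + 1) M'' :=
  localCohomologyVanishes_of_ext_exact _ _ (add_zero _) rfl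
    (fun W y hy ↦ covariant_sequence_exact₃ W
      (shortExact_shortComplexOfCompEqZero hf hfg hg) y rfl hy) h h'

lemma LocalCohomologyVanishes.left_of_exact (hf : Function.Injective f)
    (hfg : Function.Exact f g) (hg : Function.Surjective g)
    (h'' : LocalCohomologyVanishes J (i + 1) M'')
    (h : LocalCohomologyVanishes J (i + 2) M) : LocalCohomologyVanishes J (i + 2) M' :=
  localCohomologyVanishes_of_ext_exact _ _ rfl (add_zero _)
    (fun W y hy ↦ covariant_sequence_exact₁ W
      (shortExact_shortComplexOfCompEqZero hf hfg hg) y hy rfl) h'' h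

end

lemma LocalCohomologyVanishes.prod (hM : LocalCohomologyVanishes J (i + 1) M)
    (hN : LocalCohomologyVanishes J (i + 1) N) : LocalCohomologyVanishes J (i + 1) (M × N) :=
  .middle_of_exact LinearMap.inl_injective .inl_snd LinearMap.snd_surjective hM hN

lemma localCohomologyVanishes_of_subsingleton [Subsingleton M] :
    LocalCohomologyVanishes J (i + 1) M := by
  have hM : Limits.IsZero (ModuleCat.of R M) := ModuleCat.isZero_of_subsingleton _
  refine localCohomologyVanishes_succ_iff.2 fun s x ↦ ⟨s, le_rfl, ?_⟩
  rw [← x.comp_mk₀_id, hM.eq_zero_of_src (𝟙 _), mk₀_zero, comp_zero, comp_zero]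

lemma LocalCohomologyVanishes.pi (h : LocalCohomologyVanishes J (i + 1) M) (ι : Type u)
    [Finite ι] : LocalCohomologyVanishes J (i + 1) (ι → M) := by
  induction ι using Finite.induction_empty_option with
  | of_equiv e ih => exact ih.of_equiv (LinearEquiv.funCongrLeft R M e.symm)
  | h_empty => exact localCohomologyVanishes_of_subsingleton
  | h_option ih =>
    exact (h.prod ih).of_equiv (LinearEquiv.piOptionEquivProd R (M := fun _ ↦ M)).symm

lemma LocalCohomologyVanishes.tensor_free (h : LocalCohomologyVanishes J (i + 1) M)
    [Module.Free R N] [Module.Finite R N] : LocalCohomologyVanishes J (i + 1) (M ⊗[R] N) :=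
  (h.pi (Module.Free.ChooseBasisIndex R N)).of_equiv <|
    (TensorProduct.piScalarRight R R M _).symm ≪≫ₗ
      (Module.Free.chooseBasis R N).equivFun.symm.lTensor M

lemma localCohomologyVanishes_of_free (h : LocalCohomologyVanishes J (i + 1) R)
    [Module.Free R N] [Module.Finite R N] : LocalCohomologyVanishes J (i + 1) N :=
  (h.tensor_free (N := N)).of_equiv (TensorProduct.lid R N)

end LongExactSequence

section Torsion

open Abelian.Ext

variable {R : Type u} [CommRing R] {J : Ideal R}

/-- Every element of `N` is killed by a power of `J`, i.e. `N = Γ_J(N)`. -/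
def IsPowTorsion (J : Ideal R) (N : Type*) [AddCommGroup N] [Module R N] : Prop :=
  ∀ x : N, ∃ c : ℕ, ∀ a ∈ J ^ c, a • x = 0

lemma IsPowTorsion.exists_pow_smul_top_le_ker {N : Type*} [AddCommGroup N] [Module R N]
    (hN : IsPowTorsion J N) {F : Type*} [AddCommGroup F] [Module R F] [Module.Finite R F]
    (g : F →ₗ[R] N) : ∃ s : ℕ, J ^ s • (⊤ : Submodule R F) ≤ LinearMap.ker g := by
  obtain ⟨S, hS⟩ := (Module.Finite.fg_top : (⊤ : Submodule R F).FG)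
  choose c hc using hN
  refine ⟨S.sup (c ∘ g), ?_⟩
  rw [← hS, Submodule.smul_le]
  intro a ha y hy
  have span_le : Submodule.span R S ≤ LinearMap.ker (a • g) :=
    Submodule.span_le.2 fun z hz ↦
      hc (g z) a (Ideal.pow_le_pow_right (Finset.le_sup (f := c ∘ g) hz) ha)
  simpa using span_le hy

/-- Artin–Rees. -/
lemma exists_mem_pow_smul_top_of_val_mem [IsNoetherianRing R] {F : Type*} [AddCommGroup F]
    [Module R F] [Module.Finite R F] (N : Submodule R F) (s : ℕ) :
    ∃ t : ℕ, ∀ x : N, (x : F) ∈ J ^ t • (⊤ : Submodule R F) →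
      x ∈ J ^ s • (⊤ : Submodule R N) := by
  obtain ⟨k, hk⟩ := J.exists_pow_inf_eq_pow_smul N
  refine ⟨k + s, fun x hx ↦ ?_⟩
  have hx' : (x : F) ∈ J ^ (k + s) • (⊤ : Submodule R F) ⊓ N := ⟨hx, x.2⟩
  rw [hk _ (Nat.le_add_right k s), Nat.add_sub_cancel_left] at hx'
  have mem_map : (x : F) ∈ (J ^ s • (⊤ : Submodule R N)).map N.subtype := by
    rw [Submodule.map_smul'', Submodule.map_top, Submodule.range_subtype]
    exact Submodule.smul_mono le_rfl inf_le_right hx'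
  obtain ⟨y, hy, hyx⟩ := mem_map
  rwa [← Subtype.ext hyx]

/-- Dimension shifting, naturally in the surjection `π`. -/
lemma exists_ext_ker_of_surjective {F₀ F N : Type u} [AddCommGroup F₀] [Module R F₀]
    [Module.Free R F₀] [AddCommGroup F] [Module R F] [AddCommGroup N] [Module R N]
    {π : F₀ →ₗ[R] F} (hπ : Function.Surjective π) {i : ℕ}
    (x : Abelian.Ext (ModuleCat.of R F) (ModuleCat.of R N) (i + 1)) :
    ∃ y : Abelian.Ext (ModuleCat.of R (LinearMap.ker π)) (ModuleCat.of R N) i,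
      ∀ {G₀ G : Type u} [AddCommGroup G₀] [Module R G₀] [AddCommGroup G] [Module R G]
        {ρ : G₀ →ₗ[R] G}, Function.Surjective ρ → ∀ (f₀ : G₀ →ₗ[R] F₀) (f : G →ₗ[R] F)
        (hker : ∀ z ∈ LinearMap.ker ρ, f₀ z ∈ LinearMap.ker π), f ∘ₗ ρ = π ∘ₗ f₀ →
        (mk₀ (ModuleCat.ofHom (f₀.restrict hker))).comp y (zero_add _) = 0 →
        (mk₀ (ModuleCat.ofHom f)).comp x (zero_add _) = 0 := by
  have hS := LinearMap.shortExact_shortComplexKer hπ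
  have : Projective (ModuleCat.of R F₀) :=
    ModuleCat.projective_of_free (Module.Free.chooseBasis R F₀)
  obtain ⟨y, rfl⟩ := contravariant_sequence_exact₃ hS (ModuleCat.of R N) x
    ((subsingleton_of_projective (ModuleCat.of R F₀) _ _).elim _ _) (add_comm 1 i)
  refine ⟨y, fun {G₀ G} _ _ _ _ {ρ} hρ f₀ f hker comm hy ↦ ?_⟩
  let Φ : ρ.shortComplexKer ⟶ π.shortComplexKer :=
    { τ₁ := ModuleCat.ofHom (f₀.restrict hker), τ₂ := ModuleCat.ofHom f₀, τ₃ := ModuleCat.ofHom f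
      comm₁₂ := rfl, comm₂₃ := congrArg ModuleCat.ofHom comm.symm }
  have naturality := ShortComplex.ShortExact.extClass_naturality
    (LinearMap.shortExact_shortComplexKer hρ) hS Φ
  rw [← comp_assoc _ _ _ (zero_add 1) (add_comm 1 i) (by omega)]
  refine (congrArg (fun z ↦ Abelian.Ext.comp z y (add_comm 1 i)) naturality.symm).trans ?_
  dsimp only
  rw [comp_assoc _ _ _ (add_zero 1) (zero_add _) (by omega)]
  exact (congrArg (fun z ↦ (LinearMap.shortExact_shortComplexKer hρ).extClass.comp z
    (add_comm 1 i)) hy).trans (comp_zero ..)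

lemma exists_lift_of_range_le_smul_top {F₀ F G : Type u} [AddCommGroup F₀] [Module R F₀]
    [AddCommGroup F] [Module R F] [AddCommGroup G] [Module R G] {π : F₀ →ₗ[R] F}
    (hπ : Function.Surjective π) {I : Ideal R} {f : G →ₗ[R] F}
    (hf : LinearMap.range f ≤ I • (⊤ : Submodule R F)) :
    ∃ (G₀ : Submodule R (F₀ × G)) (ρ : G₀ →ₗ[R] G) (f₀ : G₀ →ₗ[R] F₀), Function.Surjective ρ ∧
      f ∘ₗ ρ = π ∘ₗ f₀ ∧ LinearMap.range f₀ ≤ I • (⊤ : Submodule R F₀) := by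
  let G₀ : Submodule R (F₀ × G) := LinearMap.eqLocus (π ∘ₗ LinearMap.fst R F₀ G)
    (f ∘ₗ LinearMap.snd R F₀ G) ⊓ (I • ⊤ : Submodule R F₀).prod ⊤
  refine ⟨G₀, LinearMap.snd R F₀ G ∘ₗ G₀.subtype, LinearMap.fst R F₀ G ∘ₗ G₀.subtype, fun w ↦ ?_,
    LinearMap.ext fun z ↦ z.2.1.symm, ?_⟩
  · have hw : f w ∈ (I • ⊤ : Submodule R F₀).map π := by
      rw [Submodule.map_smul'', Submodule.map_top, LinearMap.range_eq_top.2 hπ]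
      exact hf ⟨w, rfl⟩
    obtain ⟨z, hz, hzw⟩ := hw
    exact ⟨⟨(z, w), hzw, hz, trivial⟩, rfl⟩
  · rintro _ ⟨z, rfl⟩
    exact z.2.2.1

lemma IsPowTorsion.ext_comp_eq_zero [IsNoetherianRing R] {N : Type u} [AddCommGroup N]
    [Module R N] (hN : IsPowTorsion J N) (i : ℕ) {F : Type u} [AddCommGroup F] [Module R F]
    [Module.Finite R F] (x : Abelian.Ext (ModuleCat.of R F) (ModuleCat.of R N) i) :
    ∃ s : ℕ, ∀ {G : Type u} [AddCommGroup G] [Module R G] (f : G →ₗ[R] F),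
      LinearMap.range f ≤ J ^ s • (⊤ : Submodule R F) →
      (mk₀ (ModuleCat.ofHom f)).comp x (zero_add _) = 0 := by
  induction i generalizing F with
  | zero =>
    obtain ⟨g, rfl⟩ := (mk₀_bijective _ _).2 x
    obtain ⟨s, hs⟩ := hN.exists_pow_smul_top_le_ker g.hom
    refine ⟨s, fun f hf ↦ ?_⟩
    have hfg : ModuleCat.ofHom f ≫ g = 0 := ModuleCat.hom_ext <|
      LinearMap.ext fun y ↦ hs (hf ⟨y, rfl⟩)
    rw [mk₀_comp_mk₀, hfg, mk₀_zero]
  | succ i ih =>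
    obtain ⟨k, π, hπ⟩ := Module.Finite.exists_fin' R F
    obtain ⟨y, hy⟩ := exists_ext_ker_of_surjective hπ x
    obtain ⟨s, hs⟩ := ih y
    obtain ⟨t, ht⟩ := exists_mem_pow_smul_top_of_val_mem (J := J) (LinearMap.ker π) s
    refine ⟨t, fun {G} _ _ f hf ↦ ?_⟩
    obtain ⟨G₀, ρ, f₀, ρ_surjective, comm, range_le⟩ := exists_lift_of_range_le_smul_top hπ hf
    have hker : ∀ z ∈ LinearMap.ker ρ, f₀ z ∈ LinearMap.ker π := fun z hz ↦
      (LinearMap.congr_fun comm z).symm.trans ((congrArg f hz).trans f.map_zero)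
    let f₁ : LinearMap.ker ρ →ₗ[R] LinearMap.ker π := f₀.restrict hker
    have f₁_range_le : LinearMap.range f₁ ≤ J ^ s • ⊤ := by
      rintro _ ⟨z, rfl⟩
      exact ht _ (range_le ⟨z, rfl⟩)
    have f₁_comp_eq_zero := @hs (LinearMap.ker ρ) _ _ f₁ f₁_range_le
    exact hy ρ_surjective f₀ f hker comm f₁_comp_eq_zero

lemma IsPowTorsion.localCohomologyVanishes [IsNoetherianRing R] {N : Type u} [AddCommGroup N]
    [Module R N] (hN : IsPowTorsion J N) (i : ℕ) : LocalCohomologyVanishes J (i + 1) N := by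
  refine localCohomologyVanishes_succ_iff.2 fun s x ↦ ?_
  obtain ⟨y, hy⟩ := exists_ext_ker_of_surjective (J ^ s).mkQ_surjective x
  obtain ⟨r, hr⟩ := hN.ext_comp_eq_zero i y
  obtain ⟨t, ht⟩ := exists_mem_pow_smul_top_of_val_mem (J := J) (LinearMap.ker (J ^ s).mkQ) r
  refine ⟨s + t, Nat.le_add_right s t, ?_⟩
  refine hy (J ^ (s + t)).mkQ_surjective LinearMap.id _ (fun z hz ↦ ?_) rfl (hr _ ?_)
  · rw [Submodule.ker_mkQ] at hz ⊢
    exact Ideal.pow_le_pow_right (Nat.le_add_right s t) hz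
  · rintro _ ⟨⟨z, hz⟩, rfl⟩
    refine ht _ ?_
    rw [Submodule.ker_mkQ] at hz
    simpa using Ideal.pow_le_pow_right (Nat.le_add_left t s) hz

end Torsion

section LocallyOff

variable {R : Type*} [CommRing R] {J : Ideal R} {Q Q' : R → Prop}

/-- Locally on the complement of `V(J)` in `Spec R`, the property `Q` holds up to a unit: every
prime `p` outside `V(J)` has an `s ∉ p` with `Q s`. Statements "up to `s`" below
become honest ones after inverting `s`. -/
def LocallyOff (J : Ideal R) (Q : R → Prop) : Prop :=
  ∀ p : Ideal R, p.IsPrime → ¬ J ≤ p → ∃ s ∉ p, Q s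

lemma LocallyOff.mono (h : LocallyOff J Q) (imp : ∀ s, Q s → Q' s) : LocallyOff J Q' :=
  fun p hp hJp ↦ (h p hp hJp).imp fun s hs ↦ ⟨hs.1, imp s hs.2⟩

lemma LocallyOff.mul_self (h : LocallyOff J Q) (imp : ∀ s, Q s → Q' (s * s)) : LocallyOff J Q' :=
  fun p hp hJp ↦ let ⟨s, hs, hQ⟩ := h p hp hJp; ⟨s * s, hp.mul_notMem hs hs, imp s hQ⟩

lemma locallyOff_mem_pow (J : Ideal R) (c : ℕ) : LocallyOff J (· ∈ J ^ c) :=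
  fun _ hp hJp ↦ (SetLike.not_le_iff_exists.1 (mt hp.le_of_pow_le hJp)).imp fun _ ↦ And.symm

lemma LocallyOff.exists_pow_le [IsNoetherianRing R] {I : Ideal R} (h : LocallyOff J (· ∈ I)) :
    ∃ c : ℕ, J ^ c ≤ I := by
  refine Ideal.exists_pow_le_of_le_radical_of_fg ?_ (IsNoetherian.noetherian J)
  rw [Ideal.radical_eq_sInf]
  refine le_sInf fun p ⟨hIp, hp⟩ ↦ ?_
  by_contra hJp
  obtain ⟨s, hs, hsI⟩ := h p hp hJp
  exact hs (hIp hsI)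

lemma isPowTorsion_of_locallyOff [IsNoetherianRing R] {N : Type*} [AddCommGroup N] [Module R N]
    (h : LocallyOff J fun s ↦ ∀ x : N, s • x = 0) : IsPowTorsion J N := by
  obtain ⟨c, hc⟩ := LocallyOff.exists_pow_le (I := Module.annihilator R N)
    (h.mono fun s ↦ Module.mem_annihilator.2)
  exact fun x ↦ ⟨c, fun a ha ↦ Module.mem_annihilator.1 (hc ha) x⟩

end LocallyOff

section IsInverseUpTo

variable {R M N : Type*} [CommRing R] {J : Ideal R} [AddCommGroup M] [Module R M]
  [AddCommGroup N] [Module R N]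

/-- `v` is an inverse of `u` up to the scalar `s`. -/
structure IsInverseUpTo (s : R) (u : M →ₗ[R] N) (v : N →ₗ[R] M) : Prop where
  left_inv : v ∘ₗ u = s • LinearMap.id
  right_inv : u ∘ₗ v = s • LinearMap.id

/-- `u` is an isomorphism of sheaves on the complement of `V(J)`. -/
def IsIsoOff (J : Ideal R) (u : M →ₗ[R] N) : Prop :=
  LocallyOff J fun s ↦ ∃ v, IsInverseUpTo s u v

lemma IsInverseUpTo.apply_left {s : R} {u : M →ₗ[R] N} {v : N →ₗ[R] M}
    (h : IsInverseUpTo s u v) (x : M) : v (u x) = s • x :=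
  LinearMap.congr_fun h.left_inv x

lemma IsInverseUpTo.apply_right {s : R} {u : M →ₗ[R] N} {v : N →ₗ[R] M}
    (h : IsInverseUpTo s u v) (y : N) : u (v y) = s • y :=
  LinearMap.congr_fun h.right_inv y

lemma exists_isInverseUpTo_mul_self {u : M →ₗ[R] N} {s : R}
    (hker : ∀ x, u x = 0 → s • x = 0) (hrange : ∀ y, ∃ x, u x = s • y) :
    ∃ v, IsInverseUpTo (s * s) u v := by
  choose w hw using hrange
  have smul_eq {x x' : M} (h : u x = u x') : s • x = s • x' := by
    rw [← sub_eq_zero, ← smul_sub]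
    exact hker _ (by rw [map_sub, h, sub_self])
  let v : N →ₗ[R] M :=
    { toFun := fun y ↦ s • w y
      map_add' := fun x y ↦ by
        rw [← smul_add]
        exact smul_eq (by rw [map_add, hw, hw, hw, smul_add])
      map_smul' := fun c x ↦ by
        rw [RingHom.id_apply, smul_comm]
        exact smul_eq (by rw [map_smul, hw, hw, smul_comm]) }
  refine ⟨v, LinearMap.ext fun x ↦ ?_, LinearMap.ext fun y ↦ ?_⟩
  · change s • w (u x) = (s * s) • x
    rw [mul_smul]
    exact smul_eq (by rw [hw, map_smul])
  · change u (s • w y) = (s * s) • y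
    rw [map_smul, hw, mul_smul]

lemma exists_apply_eq_smul_of_mem_annihilator {u : M →ₗ[R] N} {s : R}
    (hs : s ∈ Module.annihilator R (N ⧸ LinearMap.range u)) (y : N) : ∃ x, u x = s • y := by
  have mk_eq_zero := Module.mem_annihilator.1 hs (Submodule.Quotient.mk y)
  rwa [← Submodule.Quotient.mk_smul, Submodule.Quotient.mk_eq_zero] at mk_eq_zero

lemma isIsoOff_of_pow_le_annihilator {u : M →ₗ[R] N}
    (hker : ∃ c : ℕ, J ^ c ≤ Module.annihilator R (LinearMap.ker u))
    (hcoker : ∃ c : ℕ, J ^ c ≤ Module.annihilator R (N ⧸ LinearMap.range u)) :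
    IsIsoOff J u := by
  obtain ⟨c, hc⟩ := hker
  obtain ⟨d, hd⟩ := hcoker
  refine (locallyOff_mem_pow J (max c d)).mul_self fun s hs ↦ exists_isInverseUpTo_mul_self ?_ ?_
  · intro x hx
    have hsc := hc (Ideal.pow_le_pow_right (le_max_left c d) hs)
    exact congrArg Subtype.val (Module.mem_annihilator.1 hsc ⟨x, hx⟩)
  · exact exists_apply_eq_smul_of_mem_annihilator
      (hd (Ideal.pow_le_pow_right (le_max_right c d) hs))

end IsInverseUpTo

section IsIsoOff

variable {R : Type u} [CommRing R] {J : Ideal R} {i : ℕ} {M N : Type u}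
  [AddCommGroup M] [Module R M] [AddCommGroup N] [Module R N]

lemma localCohomologyVanishes_iff_of_isPowTorsion [IsNoetherianRing R] (u : M →ₗ[R] N)
    (ker_torsion : IsPowTorsion J (LinearMap.ker u))
    (coker_torsion : IsPowTorsion J (N ⧸ LinearMap.range u)) :
    LocalCohomologyVanishes J (i + 2) M ↔ LocalCohomologyVanishes J (i + 2) N := by
  have ker_injective := (LinearMap.ker u).subtype_injective
  have ker_exact : Function.Exact (LinearMap.ker u).subtype u.rangeRestrict := by
    rw [LinearMap.exact_iff, LinearMap.ker_rangeRestrict, Submodule.range_subtype]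
  have range_injective := (LinearMap.range u).subtype_injective
  have coker_exact := LinearMap.exact_subtype_mkQ (LinearMap.range u)
  have coker_surjective := (LinearMap.range u).mkQ_surjective
  constructor
  · intro hM
    have hrange : LocalCohomologyVanishes J (i + 2) (LinearMap.range u) :=
      .right_of_exact ker_injective ker_exact u.surjective_rangeRestrict hM
        (ker_torsion.localCohomologyVanishes _)
    exact .middle_of_exact range_injective coker_exact coker_surjective hrange
      (coker_torsion.localCohomologyVanishes _)
  · intro hN
    have hrange : LocalCohomologyVanishes J (i + 2) (LinearMap.range u) :=
      .left_of_exact range_injective coker_exact coker_surjective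
        (coker_torsion.localCohomologyVanishes _) hN
    exact .middle_of_exact ker_injective ker_exact u.surjective_rangeRestrict
      (ker_torsion.localCohomologyVanishes _) hrange

lemma IsIsoOff.localCohomologyVanishes_iff [IsNoetherianRing R] {u : M →ₗ[R] N}
    (h : IsIsoOff J u) :
    LocalCohomologyVanishes J (i + 2) M ↔ LocalCohomologyVanishes J (i + 2) N := by
  refine localCohomologyVanishes_iff_of_isPowTorsion u
    (isPowTorsion_of_locallyOff <| h.mono ?_) (isPowTorsion_of_locallyOff <| h.mono ?_)
  · rintro s ⟨v, hv⟩ ⟨x, hx⟩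
    refine Subtype.ext ?_
    change s • x = 0
    rw [← hv.apply_left, LinearMap.mem_ker.1 hx, map_zero]
  · rintro s ⟨v, hv⟩ y
    obtain ⟨y, rfl⟩ := Submodule.Quotient.mk_surjective _ y
    rw [← Submodule.Quotient.mk_smul, Submodule.Quotient.mk_eq_zero, ← hv.apply_right]
    exact LinearMap.mem_range_self u (v y)

end IsIsoOff

section LocallySplit

variable {R X Y Z : Type*} [CommRing R] {J : Ideal R} [AddCommGroup X] [Module R X]
  [AddCommGroup Y] [Module R Y] [AddCommGroup Z] [Module R Z]

/-- `r` and `σ` split the sequence `X → Y → Z` given by `f` and `g` up to the scalar `s`. -/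
structure IsSplittingUpTo (s : R) (f : X →ₗ[R] Y) (g : Y →ₗ[R] Z) (r : Y →ₗ[R] X)
    (σ : Z →ₗ[R] Y) : Prop where
  retraction_apply : ∀ x, r (f x) = s • x
  apply_section : ∀ z, g (σ z) = s • z
  add_eq_smul : ∀ y, f (r y) + σ (g y) = s • y

/-- `0 → X → Y → Z → 0` is a complex which is locally split exact on the complement of `V(J)`. -/
structure IsLocallySplit (J : Ideal R) (f : X →ₗ[R] Y) (g : Y →ₗ[R] Z) : Prop where
  comp_eq_zero : g ∘ₗ f = 0
  locally_split : LocallyOff J fun s ↦ ∃ r σ, IsSplittingUpTo s f g r σ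

variable {f : X →ₗ[R] Y} {g : Y →ₗ[R] Z}

lemma IsSplittingUpTo.mkQ_section_apply {s : R} {r : Y →ₗ[R] X} {σ : Z →ₗ[R] Y}
    (hs : IsSplittingUpTo s f g r σ) (y : Y) :
    (LinearMap.range f).mkQ (σ (g y)) = s • (LinearMap.range f).mkQ y := by
  refine (Submodule.Quotient.eq _).2 ⟨-r y, ?_⟩
  rw [map_neg, eq_sub_iff_add_eq, neg_add_eq_iff_eq_add]
  exact (hs.add_eq_smul y).symm

lemma IsLocallySplit.apply_apply_eq_zero (h : IsLocallySplit J f g) (x : X) : g (f x) = 0 :=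
  LinearMap.congr_fun h.comp_eq_zero x

lemma IsLocallySplit.isIsoOff_codRestrict_ker (h : IsLocallySplit J f g) :
    IsIsoOff J (f.codRestrict (LinearMap.ker g) h.apply_apply_eq_zero) := by
  refine h.locally_split.mono ?_
  rintro s ⟨r, σ, hs⟩
  refine ⟨r ∘ₗ (LinearMap.ker g).subtype, LinearMap.ext hs.retraction_apply,
    LinearMap.ext fun y ↦ Subtype.ext ?_⟩
  have add_eq_smul := hs.add_eq_smul y
  rwa [LinearMap.mem_ker.1 y.2, map_zero, add_zero] at add_eq_smul

lemma IsLocallySplit.isIsoOff_subtype_range (h : IsLocallySplit J f g) :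
    IsIsoOff J (LinearMap.range g).subtype := by
  refine h.locally_split.mono ?_
  rintro s ⟨r, σ, hs⟩
  exact ⟨g.rangeRestrict ∘ₗ σ, LinearMap.ext fun z ↦ Subtype.ext (hs.apply_section z),
    LinearMap.ext hs.apply_section⟩

lemma IsLocallySplit.range_le_ker (h : IsLocallySplit J f g) :
    LinearMap.range f ≤ LinearMap.ker g :=
  LinearMap.range_le_ker_iff.2 h.comp_eq_zero

lemma IsLocallySplit.isIsoOff_liftQ_range (h : IsLocallySplit J f g) :
    IsIsoOff J ((LinearMap.range f).liftQ g h.range_le_ker) := by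
  refine h.locally_split.mono ?_
  rintro s ⟨r, σ, hs⟩
  exact ⟨(LinearMap.range f).mkQ ∘ₗ σ,
    Submodule.linearMap_qext _ (LinearMap.ext hs.mkQ_section_apply), LinearMap.ext hs.apply_section⟩

/-- The section is induced by the endomorphism `s • 1 - f ∘ r`, which vanishes on `ker g`. -/
lemma exists_isSplittingUpTo_of_retraction (hg : Function.Surjective g)
    (hfg : Function.Exact f g) {s : R} {r : Y →ₗ[R] X} (hr : ∀ x, r (f x) = s • x) :
    ∃ σ, IsSplittingUpTo s f g r σ := by
  let k : Y →ₗ[R] Y := s • LinearMap.id - f ∘ₗ r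
  have ker_le : LinearMap.ker g ≤ LinearMap.ker k := by
    intro y hy
    obtain ⟨x, rfl⟩ := (hfg y).1 hy
    simp [k, hr]
  let σ : Z →ₗ[R] Y := (LinearMap.ker g).liftQ k ker_le ∘ₗ (g.quotKerEquivOfSurjective hg).symm
  have σ_apply (y : Y) : σ (g y) = s • y - f (r y) := by
    have symm_apply : (g.quotKerEquivOfSurjective hg).symm (g y) = (LinearMap.ker g).mkQ y :=
      (LinearEquiv.symm_apply_eq _).2 rfl
    simp [σ, symm_apply, k]
  refine ⟨σ, hr, fun z ↦ ?_, fun y ↦ by rw [σ_apply, add_sub_cancel]⟩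
  obtain ⟨y, rfl⟩ := hg z
  rw [σ_apply, map_sub, map_smul, hfg.apply_apply_eq_zero, sub_zero]

lemma exists_isSplittingUpTo_of_section (hf : Function.Injective f) (hfg : Function.Exact f g)
    {s : R} {σ : Z →ₗ[R] Y} (hσ : ∀ z, g (σ z) = s • z) : ∃ r, IsSplittingUpTo s f g r σ := by
  let k : Y →ₗ[R] Y := s • LinearMap.id - σ ∘ₗ g
  have k_mem_range (y : Y) : k y ∈ LinearMap.range f := (hfg (k y)).1 (by simp [k, hσ])
  let r : Y →ₗ[R] X :=
    (LinearEquiv.ofInjective f hf).symm ∘ₗ k.codRestrict (LinearMap.range f) k_mem_range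
  have f_r (y : Y) : f (r y) = s • y - σ (g y) :=
    congrArg Subtype.val ((LinearEquiv.ofInjective f hf).apply_symm_apply ⟨k y, k_mem_range y⟩)
  refine ⟨r, fun x ↦ hf ?_, hσ, fun y ↦ by rw [f_r, sub_add_cancel]⟩
  rw [f_r, hfg.apply_apply_eq_zero, map_zero, sub_zero, map_smul]

lemma IsLocallySplit.localCohomologyVanishes {R : Type u} [CommRing R]
    [IsNoetherianRing R] {J : Ideal R} {X Y Z : Type u} [AddCommGroup X] [Module R X]
    [AddCommGroup Y] [Module R Y] [AddCommGroup Z] [Module R Z] {f : X →ₗ[R] Y} {g : Y →ₗ[R] Z}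
    {i : ℕ} (h : IsLocallySplit J f g) (hX : LocalCohomologyVanishes J (i + 2) X)
    (hZ : LocalCohomologyVanishes J (i + 2) Z) :
    LocalCohomologyVanishes J (i + 2) Y := by
  have hker := h.isIsoOff_codRestrict_ker.localCohomologyVanishes_iff.1 hX
  have hrange := h.isIsoOff_subtype_range.localCohomologyVanishes_iff.2 hZ
  refine .middle_of_exact (LinearMap.ker g).subtype_injective ?_ g.surjective_rangeRestrict
    hker hrange
  rw [LinearMap.exact_iff, LinearMap.ker_rangeRestrict, Submodule.range_subtype]

end LocallySplit

section ExteriorSquare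

variable {R : Type*} [CommRing R] {M N : Type*} [AddCommGroup M] [Module R M]
  [AddCommGroup N] [Module R N]

/-- The wedge product `M × M → ⋀² M`. -/
def wedge (R : Type*) [CommRing R] {M : Type*} [AddCommGroup M] [Module R M] :
    M →ₗ[R] M →ₗ[R] ⋀[R]^2 M :=
  LinearMap.mk₂ R (fun x y ↦ exteriorPower.ιMulti R 2 ![x, y])
    (fun x x' y ↦ (exteriorPower.ιMulti R 2).map_vecCons_add ![y] x x')
    (fun c x y ↦ (exteriorPower.ιMulti R 2).map_vecCons_smul ![y] c x)
    (fun x y y' ↦ ((exteriorPower.ιMulti R 2).curryLeft x).map_vecCons_add ![] y y')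
    (fun c x y ↦ ((exteriorPower.ιMulti R 2).curryLeft x).map_vecCons_smul ![] c y)

lemma wedge_self (x : M) : wedge R x x = 0 :=
  (exteriorPower.ιMulti R 2).map_eq_zero_of_eq ![x, x] (i := 0) (j := 1) rfl zero_ne_one

lemma wedge_swap (x y : M) : wedge R y x = -wedge R x y := by
  have h := wedge_self (R := R) (x + y)
  simp only [map_add, LinearMap.add_apply, wedge_self, zero_add, add_zero] at h
  exact eq_neg_of_add_eq_zero_left h

lemma exteriorSquare_hom_ext {f g : ⋀[R]^2 M →ₗ[R] N}
    (h : ∀ x y, f (wedge R x y) = g (wedge R x y)) : f = g := by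
  refine exteriorPower.linearMap_ext (AlternatingMap.ext fun v ↦ ?_)
  have hv : v = ![v 0, v 1] := List.ofFn_inj.1 rfl
  rw [hv]
  exact h (v 0) (v 1)

/-- The linear map `⋀² M → N` induced by an alternating bilinear map. -/
def exteriorSquareLift (b : M →ₗ[R] M →ₗ[R] N) (hb : ∀ x, b x x = 0) : ⋀[R]^2 M →ₗ[R] N :=
  exteriorPower.alternatingMapLinearEquiv
    { toFun := fun v ↦ b (v 0) (v 1)
      map_update_add' := by
        intro _ v i x y
        fin_cases i <;> simp
      map_update_smul' := by
        intro _ v i c x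
        fin_cases i <;> simp
      map_eq_zero_of_eq' := by
        intro v i j hij hne
        fin_cases i <;> fin_cases j <;> simp_all }

@[simp] lemma exteriorSquareLift_wedge (b : M →ₗ[R] M →ₗ[R] N) (hb : ∀ x, b x x = 0) (x y : M) :
    exteriorSquareLift b hb (wedge R x y) = b x y :=
  exteriorPower.alternatingMapLinearEquiv_apply_ιMulti _ ![x, y]

@[simp] lemma exteriorPower_map_wedge (f : M →ₗ[R] N) (x y : M) :
    exteriorPower.map 2 f (wedge R x y) = wedge R (f x) (f y) := by
  refine (exteriorPower.map_apply_ιMulti f ![x, y]).trans (congrArg _ ?_)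
  exact List.ofFn_inj.1 rfl

lemma exteriorPower_map_map_of_comp_eq_smul {f : M →ₗ[R] N} {f' : N →ₗ[R] M} {s : R}
    (h : ∀ x, f' (f x) = s • x) (x : ⋀[R]^2 M) :
    exteriorPower.map 2 f' (exteriorPower.map 2 f x) = (s * s) • x := by
  refine LinearMap.congr_fun (f := exteriorPower.map 2 f' ∘ₗ exteriorPower.map 2 f)
    (g := (s * s) • LinearMap.id) (exteriorSquare_hom_ext fun x y ↦ ?_) x
  simp [h, mul_smul]

lemma IsInverseUpTo.exteriorSquare {s : R} {u : M →ₗ[R] N} {v : N →ₗ[R] M}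
    (h : IsInverseUpTo s u v) :
    IsInverseUpTo (s * s) (exteriorPower.map 2 u) (exteriorPower.map 2 v) :=
  ⟨LinearMap.ext (exteriorPower_map_map_of_comp_eq_smul h.apply_left),
    LinearMap.ext (exteriorPower_map_map_of_comp_eq_smul h.apply_right)⟩

lemma IsIsoOff.exteriorSquare {J : Ideal R} {u : M →ₗ[R] N} (h : IsIsoOff J u) :
    IsIsoOff J (exteriorPower.map 2 u) :=
  LocallyOff.mul_self h fun _ ⟨_, hv⟩ ↦ ⟨_, hv.exteriorSquare⟩

lemma IsInverseUpTo.exists_exteriorSquare_fin_two {s : R} {u : M →ₗ[R] Fin 2 → R}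
    {v : (Fin 2 → R) →ₗ[R] M} (h : IsInverseUpTo s u v) :
    ∃ (u' : ⋀[R]^2 M →ₗ[R] R) (v' : R →ₗ[R] ⋀[R]^2 M), IsInverseUpTo (s * s) u' v' := by
  obtain ⟨e⟩ : Nonempty (R ≃ₗ[R] ⋀[R]^2 (Fin 2 → R)) := by
    rcases subsingleton_or_nontrivial R with hR | hR
    · have := Module.subsingleton R (⋀[R]^2 (Fin 2 → R))
      exact ⟨0⟩
    · have finrank_eq_one : Module.finrank R (⋀[R]^2 (Fin 2 → R)) = 1 := by
        rw [exteriorPower.finrank_eq, Module.finrank_fin_fun, Nat.choose_self]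
      exact Module.nonempty_linearEquiv_of_finrank_eq_one finrank_eq_one
  refine ⟨e.symm ∘ₗ exteriorPower.map 2 u, exteriorPower.map 2 v ∘ₗ e,
    LinearMap.ext fun x ↦ ?_, LinearMap.ext fun a ↦ ?_⟩
  · simp [h.exteriorSquare.apply_left]
  · simp [h.exteriorSquare.apply_right]

end ExteriorSquare

section ExteriorSquareExtension

variable {R M' M N : Type*} [CommRing R] {J : Ideal R} [AddCommGroup M'] [Module R M']
  [AddCommGroup M] [Module R M] [AddCommGroup N] [Module R N]

/-- The map `M' ⊗ M → ⋀² M` sending `a ⊗ x` to `h a ∧ x`. -/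
def tensorToExteriorSquare (h : M' →ₗ[R] M) : M' ⊗[R] M →ₗ[R] ⋀[R]^2 M :=
  TensorProduct.lift ((wedge R).comp h)

@[simp] lemma tensorToExteriorSquare_tmul (h : M' →ₗ[R] M) (a : M') (x : M) :
    tensorToExteriorSquare h (a ⊗ₜ x) = wedge R (h a) x := by
  simp [tensorToExteriorSquare]

/-- The map `⋀² M → M' ⊗ N` sending `x ∧ y` to `r x ⊗ g y - r y ⊗ g x`. -/
def exteriorSquareToTensor (r : M →ₗ[R] M') (g : M →ₗ[R] N) : ⋀[R]^2 M →ₗ[R] M' ⊗[R] N :=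
  let b := (TensorProduct.mk R M' N).compl₁₂ r g
  exteriorSquareLift (b - b.flip) fun x ↦ by simp

@[simp] lemma exteriorSquareToTensor_wedge (r : M →ₗ[R] M') (g : M →ₗ[R] N) (x y : M) :
    exteriorSquareToTensor r g (wedge R x y) = r x ⊗ₜ g y - r y ⊗ₜ g x := by
  simp [exteriorSquareToTensor]

variable {h : M' →ₗ[R] M} {g : M →ₗ[R] N}

lemma IsSplittingUpTo.lTensor {s : R} {r : M →ₗ[R] M'} {σ : N →ₗ[R] M}
    (hs : IsSplittingUpTo s h g r σ) (L : Type*) [AddCommGroup L] [Module R L] :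
    IsSplittingUpTo s (h.lTensor L) (g.lTensor L) (r.lTensor L) (σ.lTensor L) where
  retraction_apply := LinearMap.congr_fun (f := r.lTensor L ∘ₗ h.lTensor L)
    (g := s • LinearMap.id) (TensorProduct.ext' fun a x ↦ by simp [hs.retraction_apply])
  apply_section := LinearMap.congr_fun (f := g.lTensor L ∘ₗ σ.lTensor L)
    (g := s • LinearMap.id) (TensorProduct.ext' fun a x ↦ by simp [hs.apply_section])
  add_eq_smul := LinearMap.congr_fun
    (f := h.lTensor L ∘ₗ r.lTensor L + σ.lTensor L ∘ₗ g.lTensor L) (g := s • LinearMap.id)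
    (TensorProduct.ext' fun a x ↦ by
      simp [← TensorProduct.tmul_add, hs.add_eq_smul])

lemma IsLocallySplit.exteriorSquare_mkQ (hs : IsLocallySplit J h g) :
    IsLocallySplit J (exteriorPower.map 2 h) (LinearMap.range (exteriorPower.map 2 h)).mkQ where
  comp_eq_zero := LinearMap.range_mkQ_comp _
  locally_split := hs.locally_split.mul_self fun _ ⟨r, _, hrσ⟩ ↦
    ⟨exteriorPower.map 2 r, exists_isSplittingUpTo_of_retraction
      (Submodule.mkQ_surjective _) (LinearMap.exact_map_mkQ_range _)
      (exteriorPower_map_map_of_comp_eq_smul hrσ.retraction_apply)⟩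

lemma IsLocallySplit.lTensor (hs : IsLocallySplit J h g) (L : Type*) [AddCommGroup L]
    [Module R L] : IsLocallySplit J (h.lTensor L) (g.lTensor L) where
  comp_eq_zero := by rw [← LinearMap.lTensor_comp, hs.comp_eq_zero, LinearMap.lTensor_zero]
  locally_split := hs.locally_split.mono fun _ ⟨_, _, hrσ⟩ ↦ ⟨_, _, hrσ.lTensor L⟩

lemma exteriorPower_map_comp_tensorToExteriorSquare (hgh : g ∘ₗ h = 0) :
    exteriorPower.map 2 g ∘ₗ tensorToExteriorSquare h = 0 := by
  have g_h (a : M') : g (h a) = 0 := LinearMap.congr_fun hgh a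
  exact TensorProduct.ext' fun a x ↦ by simp [g_h]

lemma range_exteriorPower_map_le_ker (hgh : g ∘ₗ h = 0) :
    LinearMap.range (exteriorPower.map 2 h) ≤ LinearMap.ker (exteriorPower.map 2 g) := by
  have g_h (a : M') : g (h a) = 0 := LinearMap.congr_fun hgh a
  exact LinearMap.range_le_ker_iff.2 (exteriorSquare_hom_ext fun x y ↦ by simp [g_h])

lemma range_lTensor_le_comap_tensorToExteriorSquare (h : M' →ₗ[R] M) :
    LinearMap.range (h.lTensor M') ≤
      (LinearMap.range (exteriorPower.map 2 h)).comap (tensorToExteriorSquare h) := by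
  rintro _ ⟨z, rfl⟩
  induction z with
  | zero => simp
  | tmul a b => exact ⟨wedge R a b, by simp⟩
  | add x y hx hy => rw [map_add]; exact add_mem hx hy

lemma exteriorSquareToTensor_comp_exteriorPower_map (hgh : g ∘ₗ h = 0) (r : M →ₗ[R] M') :
    exteriorSquareToTensor r g ∘ₗ exteriorPower.map 2 h = 0 := by
  have g_h (a : M') : g (h a) = 0 := LinearMap.congr_fun hgh a
  exact exteriorSquare_hom_ext fun x y ↦ by simp [g_h]

lemma exteriorSquareToTensor_comp_tensorToExteriorSquare (hgh : g ∘ₗ h = 0) {s : R}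
    {r : M →ₗ[R] M'} (hr : ∀ a, r (h a) = s • a) :
    exteriorSquareToTensor r g ∘ₗ tensorToExteriorSquare h = s • g.lTensor M' := by
  have g_h (a : M') : g (h a) = 0 := LinearMap.congr_fun hgh a
  exact TensorProduct.ext' fun a x ↦ by simp [g_h, hr, TensorProduct.smul_tmul']

lemma IsSplittingUpTo.exteriorSquare_add_eq_smul {s : R} {r : M →ₗ[R] M'} {σ : N →ₗ[R] M}
    (hs : IsSplittingUpTo s h g r σ) (w : ⋀[R]^2 M) :
    exteriorPower.map 2 h (exteriorPower.map 2 r w) +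
      tensorToExteriorSquare h (σ.lTensor M' (exteriorSquareToTensor r g w)) +
      exteriorPower.map 2 σ (exteriorPower.map 2 g w) = (s * s) • w := by
  refine LinearMap.congr_fun (f := exteriorPower.map 2 h ∘ₗ exteriorPower.map 2 r +
    tensorToExteriorSquare h ∘ₗ σ.lTensor M' ∘ₗ exteriorSquareToTensor r g +
    exteriorPower.map 2 σ ∘ₗ exteriorPower.map 2 g) (g := (s * s) • LinearMap.id)
    (exteriorSquare_hom_ext fun x y ↦ ?_) w
  have smul_wedge : (s * s) • wedge R x y = wedge R (s • x) (s • y) := by simp [mul_smul]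
  simp only [LinearMap.add_apply, LinearMap.comp_apply, LinearMap.smul_apply, LinearMap.id_apply,
    exteriorPower_map_wedge, exteriorSquareToTensor_wedge, map_sub, LinearMap.lTensor_tmul,
    tensorToExteriorSquare_tmul, smul_wedge, ← hs.add_eq_smul, map_add]
  rw [wedge_swap (h (r y)) (σ (g x))]
  abel

/-- The sequence `0 → M' ⊗ N → ⋀² M / ⋀² M' → ⋀² N → 0`, with `(M' ⊗ M) / (M' ⊗ M')` standing in
for `M' ⊗ N` because the latter only maps to `⋀² M / ⋀² M'` locally. -/
lemma IsLocallySplit.tensorQuotient_exteriorSquareQuotient (hs : IsLocallySplit J h g) :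
    IsLocallySplit J
      ((LinearMap.range (h.lTensor M')).mapQ (LinearMap.range (exteriorPower.map 2 h))
        (tensorToExteriorSquare h) (range_lTensor_le_comap_tensorToExteriorSquare h))
      ((LinearMap.range (exteriorPower.map 2 h)).liftQ (exteriorPower.map 2 g)
        (range_exteriorPower_map_le_ker hs.comp_eq_zero)) where
  comp_eq_zero := Submodule.linearMap_qext _
    (exteriorPower_map_comp_tensorToExteriorSquare hs.comp_eq_zero)
  locally_split := by
    refine hs.locally_split.mul_self fun s ⟨r, σ, hrσ⟩ ↦ ?_
    let ρ := (LinearMap.range (exteriorPower.map 2 h)).liftQ (exteriorSquareToTensor r g)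
      (LinearMap.range_le_ker_iff.2
        (exteriorSquareToTensor_comp_exteriorPower_map hs.comp_eq_zero r))
    refine ⟨(LinearMap.range (h.lTensor M')).mkQ ∘ₗ σ.lTensor M' ∘ₗ ρ,
      (LinearMap.range (exteriorPower.map 2 h)).mkQ ∘ₗ exteriorPower.map 2 σ, ?_, ?_, ?_⟩
    · intro q
      obtain ⟨t, rfl⟩ := Submodule.mkQ_surjective _ q
      have ρ_t : exteriorSquareToTensor r g (tensorToExteriorSquare h t) = s • g.lTensor M' t :=
        LinearMap.congr_fun (exteriorSquareToTensor_comp_tensorToExteriorSquare hs.comp_eq_zero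
          hrσ.retraction_apply) t
      change (LinearMap.range (h.lTensor M')).mkQ (σ.lTensor M' (exteriorSquareToTensor r g _)) = _
      rw [ρ_t, map_smul, map_smul, (hrσ.lTensor M').mkQ_section_apply, mul_smul]
    · exact exteriorPower_map_map_of_comp_eq_smul hrσ.apply_section
    · intro q
      obtain ⟨w, rfl⟩ := Submodule.mkQ_surjective _ q
      refine (Submodule.Quotient.eq _).2 ⟨-exteriorPower.map 2 r w, ?_⟩
      rw [map_neg, eq_sub_iff_add_eq, neg_add_eq_iff_eq_add]
      exact (hrσ.exteriorSquare_add_eq_smul w).symm.trans (add_assoc _ _ _)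

theorem IsLocallySplit.localCohomologyVanishes_exteriorSquare {R : Type u} [CommRing R]
    [IsNoetherianRing R] {J : Ideal R} {M' M N : Type u} [AddCommGroup M'] [Module R M']
    [AddCommGroup M] [Module R M] [AddCommGroup N] [Module R N] {h : M' →ₗ[R] M} {g : M →ₗ[R] N}
    {i : ℕ} (hs : IsLocallySplit J h g) (hM' : LocalCohomologyVanishes J (i + 2) (⋀[R]^2 M'))
    (hM'N : LocalCohomologyVanishes J (i + 2) (M' ⊗[R] N))
    (hN : LocalCohomologyVanishes J (i + 2) (⋀[R]^2 N)) :
    LocalCohomologyVanishes J (i + 2) (⋀[R]^2 M) := by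
  have hQ := (hs.lTensor M').isIsoOff_liftQ_range.localCohomologyVanishes_iff.2 hM'N
  have hC := hs.tensorQuotient_exteriorSquareQuotient.localCohomologyVanishes hQ hN
  exact hs.exteriorSquare_mkQ.localCohomologyVanishes hM' hC

end ExteriorSquareExtension

section RankOne

variable {R : Type*} [CommRing R] {J : Ideal R} {L : Type*} [AddCommGroup L] [Module R L]

/-- A functional whose values have no common prime factor. -/
def IsPrimitive (u : L →ₗ[R] R) : Prop :=
  ∀ π : R, Prime π → ∃ x, ¬ π ∣ u x

lemma exists_prime_mem_dvd [UniqueFactorizationMonoid R] {p : Ideal R} (hp : p.IsPrime) {c : R}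
    (hc : c ≠ 0) (hcp : c ∈ p) : ∃ π ∈ p, Prime π ∧ π ∣ c := by
  obtain ⟨F, hF, hprod⟩ := UniqueFactorizationMonoid.exists_prime_factors c hc
  have prod_mem : F.prod ∈ p := p.mem_of_dvd hprod.dvd' hcp
  obtain ⟨π, hπF, hπp⟩ := (hp.multiset_prod_mem_iff_exists_mem F).1 prod_mem
  exact ⟨π, hπp, hF π hπF, (Multiset.dvd_prod hπF).trans hprod.dvd⟩

lemma IsInverseUpTo.mul_apply {s : R} {v : L →ₗ[R] R} {w : R →ₗ[R] L}
    (hvw : IsInverseUpTo s v w) (u : L →ₗ[R] R) (x : L) : s * u x = v x * u (w 1) := by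
  rw [← smul_eq_mul, ← map_smul, ← hvw.apply_left, ← smul_eq_mul, ← map_smul, ← map_smul,
    smul_eq_mul, mul_one]

variable [IsDomain R]

lemma exists_eq_smul_of_forall_dvd {u : L →ₗ[R] R} {a : R} (ha : a ≠ 0) (h : ∀ x, a ∣ u x) :
    ∃ u' : L →ₗ[R] R, u = a • u' := by
  let e := LinearEquiv.toSpanNonzeroSingleton R R a ha
  let u' : L →ₗ[R] R :=
    e.symm.toLinearMap ∘ₗ u.codRestrict (R ∙ a) fun x ↦ Ideal.mem_span_singleton.2 (h x)
  refine ⟨u', LinearMap.ext fun x ↦ ?_⟩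
  have u'_mul : u' x * a = u x := congrArg Subtype.val (e.apply_symm_apply _)
  exact u'_mul.symm.trans (mul_comm _ _)

lemma exists_isPrimitive [WfDvdMonoid R] {u : L →ₗ[R] R} (hu : u ≠ 0) :
    ∃ u' : L →ₗ[R] R, u' ≠ 0 ∧ IsPrimitive u' := by
  obtain ⟨x, hx⟩ := DFunLike.ne_iff.1 hu
  induction h : u x using (wellFounded_dvdNotUnit (α := R)).induction generalizing u with
  | _ a ih =>
    subst h
    by_cases primitive : IsPrimitive u
    · exact ⟨u, hu, primitive⟩
    · simp only [IsPrimitive, not_forall, not_exists, not_not] at primitive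
      obtain ⟨π, hπ, hdvd⟩ := primitive
      obtain ⟨u', rfl⟩ := exists_eq_smul_of_forall_dvd hπ.ne_zero hdvd
      have hx' : u' x ≠ 0 := right_ne_zero_of_mul hx
      exact ih (u' x) ⟨hx', π, hπ.not_isUnit, mul_comm _ _⟩ (right_ne_zero_of_smul hu) hx' rfl

lemma IsInverseUpTo.apply_smul_smul {s : R} {v : L →ₗ[R] R} {w : R →ₗ[R] L}
    (hvw : IsInverseUpTo s v w) (hs : s ≠ 0) (u : L →ₗ[R] R) (x y : L) :
    u y • s • x = (s * u x) • y := by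
  have v_eq : v (u y • x) = v (u x • y) := by
    refine mul_left_cancel₀ hs ?_
    simp only [map_smul, smul_eq_mul, ← mul_assoc, hvw.mul_apply u]
    ring
  rw [smul_comm, mul_smul, ← hvw.apply_left, ← hvw.apply_left, v_eq]

lemma IsPrimitive.exists_apply_notMem [UniqueFactorizationMonoid R] {u : L →ₗ[R] R}
    (hprim : IsPrimitive u) (hu : u ≠ 0) {p : Ideal R} (hp : p.IsPrime) {s : R} (hs : s ∉ p)
    {v : L →ₗ[R] R} {w : R →ₗ[R] L} (hvw : IsInverseUpTo s v w) : ∃ x, u x ∉ p := by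
  by_contra! apply_mem
  have u_w_ne_zero : u (w 1) ≠ 0 := by
    intro h
    obtain ⟨x, hx⟩ := DFunLike.ne_iff.1 hu
    have mul_apply := hvw.mul_apply u x
    rw [h, mul_zero] at mul_apply
    exact mul_ne_zero (ne_of_mem_of_not_mem p.zero_mem hs).symm hx mul_apply
  obtain ⟨π, hπp, hπ, dvd_u_w⟩ := exists_prime_mem_dvd hp u_w_ne_zero (apply_mem _)
  obtain ⟨x, not_dvd⟩ := hprim π hπ
  have dvd_mul : π ∣ s * u x := by
    rw [hvw.mul_apply u x]
    exact dvd_u_w.mul_left _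
  exact hs (p.mem_of_dvd ((hπ.dvd_or_dvd dvd_mul).resolve_right not_dvd) hπp)

/-- Line bundles on the punctured spectrum of a factorial ring are trivial: any nonzero functional,
divided by the common prime factors of its values, is a trivialization. -/
theorem exists_isIsoOff_of_locallyOff_isInverseUpTo [UniqueFactorizationMonoid R]
    (h : LocallyOff J fun s ↦ ∃ (v : L →ₗ[R] R) (w : R →ₗ[R] L), IsInverseUpTo s v w) :
    ∃ u : L →ₗ[R] R, IsIsoOff J u := by
  by_cases! exists_ne_zero : ∃ u : L →ₗ[R] R, u ≠ 0
  · obtain ⟨u₀, hu₀⟩ := exists_ne_zero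
    obtain ⟨u, hu, hprim⟩ := exists_isPrimitive hu₀
    refine ⟨u, fun p hp hJp ↦ ?_⟩
    obtain ⟨s, hs, v, w, hvw⟩ := h p hp hJp
    obtain ⟨x, hx⟩ := hprim.exists_apply_notMem hu hp hs hvw
    have hs₀ : s ≠ 0 := (ne_of_mem_of_not_mem p.zero_mem hs).symm
    refine ⟨s * u x, hp.mul_notMem hs hx, LinearMap.toSpanSingleton R L (s • x),
      LinearMap.ext fun y ↦ hvw.apply_smul_smul hs₀ u x y, LinearMap.ext_ring ?_⟩
    simp
  · refine ⟨0, fun p hp hJp ↦ ?_⟩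
    obtain ⟨s, hs, v, w, hvw⟩ := h p hp hJp
    refine absurd ?_ hs
    have s_eq_zero : s • (1 : R) = 0 := by
      rw [← hvw.apply_right, exists_ne_zero v, LinearMap.zero_apply]
    rw [← mul_one s, ← smul_eq_mul, s_eq_zero]
    exact p.zero_mem

end RankOne

section Descent

variable {R : Type*} [CommRing R] {M N M' N' : Type*} [AddCommGroup M] [Module R M]
  [AddCommGroup N] [Module R N] [AddCommGroup M'] [Module R M'] [AddCommGroup N'] [Module R N']

lemma exists_smul_comp_eq_of_comp_localized [Module.Finite R M] (S : Submonoid R)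
    (f : M →ₗ[R] M') [IsLocalizedModule S f] (g : N →ₗ[R] N') {u : M →ₗ[R] N} {v : N →ₗ[R] M}
    {e : M' →ₗ[R] N'} {e' : N' →ₗ[R] M'} {s s' : S} (he : ∀ x, e' (e x) = x)
    (hu : g ∘ₗ u = s • e ∘ₗ f) (hv : f ∘ₗ v = s' • e' ∘ₗ g) :
    ∃ t : S, t • (v ∘ₗ u) = (t * s * s') • LinearMap.id := by
  have f_v_u : f ∘ₗ v ∘ₗ u = f ∘ₗ ((s * s') • LinearMap.id) := by
    ext x
    have g_u := LinearMap.congr_fun hu x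
    have f_v := LinearMap.congr_fun hv (u x)
    simp only [LinearMap.comp_apply, LinearMap.smul_apply, Submonoid.smul_def] at g_u f_v ⊢
    rw [f_v, g_u, map_smul, he, smul_smul, LinearMap.id_apply, map_smul, Submonoid.coe_mul,
      mul_comm]
  obtain ⟨t, ht⟩ := Module.Finite.exists_smul_of_comp_eq_of_isLocalizedModule S f _ _ f_v_u
  exact ⟨t, by rw [ht, smul_smul, mul_assoc]⟩

theorem exists_isInverseUpTo_of_isLocalizedModule [Module.FinitePresentation R M]
    [Module.FinitePresentation R N] (S : Submonoid R) (f : M →ₗ[R] M') [IsLocalizedModule S f]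
    (g : N →ₗ[R] N') [IsLocalizedModule S g] (e : M' ≃ₗ[R] N') :
    ∃ s ∈ S, ∃ (u : M →ₗ[R] N) (v : N →ₗ[R] M), IsInverseUpTo s u v := by
  obtain ⟨u, s, hu⟩ :=
    Module.FinitePresentation.exists_lift_of_isLocalizedModule S g (e.toLinearMap ∘ₗ f)
  obtain ⟨v, s', hv⟩ :=
    Module.FinitePresentation.exists_lift_of_isLocalizedModule S f (e.symm.toLinearMap ∘ₗ g)
  obtain ⟨t, ht⟩ := exists_smul_comp_eq_of_comp_localized S f g e.symm_apply_apply hu hv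
  obtain ⟨t', ht'⟩ := exists_smul_comp_eq_of_comp_localized S g f e.apply_symm_apply hv hu
  refine ⟨t' * (t * s * s'), (t' * (t * s * s')).2, u, (t' * t) • v, ?_, ?_⟩
  · rw [LinearMap.smul_comp, mul_smul, ht, smul_smul]
    rfl
  · rw [LinearMap.comp_smul, mul_comm, mul_smul, ht', smul_smul,
      show t * (t' * s' * s) = t' * (t * s * s') by ac_rfl]
    rfl

theorem exists_section_of_projective_localizedModule [Module.FinitePresentation R N]
    (S : Submonoid R) [Module.Projective (Localization S) (LocalizedModule S N)]
    {q : M →ₗ[R] N} (hq : Function.Surjective q) :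
    ∃ s ∈ S, ∃ σ : N →ₗ[R] M, ∀ y, q (σ y) = s • y := by
  obtain ⟨τ, hτ⟩ := Module.projective_lifting_property (LocalizedModule.map S q) LinearMap.id
    (LocalizedModule.map_surjective S q hq)
  obtain ⟨v, s, hv⟩ := Module.FinitePresentation.exists_lift_of_isLocalizedModule S
    (LocalizedModule.mkLinearMap S M) (τ.restrictScalars R ∘ₗ LocalizedModule.mkLinearMap S N)
  obtain ⟨t, ht⟩ := exists_smul_comp_eq_of_comp_localized S (LocalizedModule.mkLinearMap S N)
    (LocalizedModule.mkLinearMap S M) (u := v) (v := q) (s' := 1)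
    (e' := (LocalizedModule.map S q).restrictScalars R) (LinearMap.congr_fun hτ) hv (by
      rw [one_smul]
      ext x
      simp [LocalizedModule.map_mk])
  refine ⟨t * s, (t * s).2, (t : R) • v, fun y ↦ ?_⟩
  rw [LinearMap.smul_apply, map_smul]
  rw [mul_one] at ht
  exact LinearMap.congr_fun ht y

lemma exists_section_of_free [Module.Free R N] {g : M →ₗ[R] N} {s : R}
    (h : ∀ y, ∃ x, g x = s • y) : ∃ σ : N →ₗ[R] M, ∀ y, g (σ y) = s • y := by
  choose w hw using h
  let b := Module.Free.chooseBasis R N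
  refine ⟨b.constr ℕ (w ∘ b), LinearMap.congr_fun (f := g ∘ₗ b.constr ℕ (w ∘ b))
    (g := s • LinearMap.id) (b.ext fun j ↦ ?_)⟩
  simp [Module.Basis.constr_basis, hw]

end Descent

section RegularSequence

open RingTheory.Sequence

section Polynomial

variable {F σ : Type*} [CommRing F]

lemma mem_span_X_image_of_X_mul_mem {t : Set σ} {j : σ} (hj : j ∉ t) {p : MvPolynomial σ F}
    (h : MvPolynomial.X j * p ∈ Ideal.span (MvPolynomial.X '' t)) :
    p ∈ Ideal.span (MvPolynomial.X '' t) := by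
  rw [MvPolynomial.mem_ideal_span_X_image] at h ⊢
  intro m hm
  obtain ⟨i, hi, him⟩ := h (Finsupp.single j 1 + m) <| by
    rwa [MvPolynomial.mem_support_iff, MvPolynomial.coeff_X_mul, ← MvPolynomial.mem_support_iff]
  refine ⟨i, hi, ?_⟩
  rwa [Finsupp.add_apply, Finsupp.single_eq_of_ne (ne_of_mem_of_not_mem hi hj), zero_add] at him

lemma span_X_image_ne_top [Nontrivial F] (t : Set σ) :
    Ideal.span (MvPolynomial.X '' t : Set (MvPolynomial σ F)) ≠ ⊤ := by
  rw [Ne, Ideal.eq_top_iff_one, MvPolynomial.mem_ideal_span_X_image]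
  intro h
  obtain ⟨i, -, hi⟩ := h 0 (by simp)
  exact hi rfl

lemma ofList_map_X_smul_top (L : List σ) :
    Ideal.ofList (L.map (MvPolynomial.X (R := F))) •
        (⊤ : Submodule (MvPolynomial σ F) (MvPolynomial σ F)) =
      Ideal.span (MvPolynomial.X '' {j | j ∈ L}) := by
  rw [smul_eq_mul, Ideal.mul_top, Ideal.ofList]
  congr 1
  ext
  simp

lemma isRegular_map_X [Nontrivial F] {L : List σ} (hL : L.Nodup) :
    IsRegular (MvPolynomial σ F) (L.map (MvPolynomial.X (R := F))) := by
  refine ⟨⟨fun k hk ↦ ?_⟩, ?_⟩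
  · rw [← List.map_take, ofList_map_X_smul_top, List.getElem_map,
      isSMulRegular_quotient_iff_mem_of_smul_mem]
    refine fun p ↦ mem_span_X_image_of_X_mul_mem fun hmem ↦ ?_
    obtain ⟨m, hm, hmk⟩ := List.mem_take_iff_getElem.1 hmem
    have := hL.getElem_inj_iff.1 hmk
    omega
  · rw [ofList_map_X_smul_top]
    exact (span_X_image_ne_top _).symm

end Polynomial

lemma localCohomologyVanishes_of_isRegular {R : Type u} [CommRing R] [IsNoetherianRing R]
    {J : Ideal R} {M : Type u} [AddCommGroup M] [Module R M] [Module.Finite R M]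
    (hJM : J • (⊤ : Submodule R M) ≠ ⊤) {rs : List R} (hrs : ∀ r ∈ rs, r ∈ J)
    (reg : IsRegular M rs) {i : ℕ} (hi : i + 1 < rs.length) :
    LocalCohomologyVanishes J (i + 1) M := by
  refine localCohomologyVanishes_succ_iff.2 fun s x ↦ ⟨s, le_rfl, ?_⟩
  have support_le : Module.support R (R ⧸ J ^ s) ⊆ PrimeSpectrum.zeroLocus J := by
    rw [Module.support_eq_zeroLocus, Ideal.annihilator_quotient,
      PrimeSpectrum.zeroLocus_subset_zeroLocus_iff]
    exact fun r hr ↦ ⟨s, Ideal.pow_mem_pow hr s⟩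
  have := ModuleCat.subsingleton_ext_of_exists_isRegular J (ModuleCat.of R (R ⧸ J ^ s)) support_le
    (ModuleCat.of R M) hJM.lt_top rs hrs reg (i + 1) hi
  rw [Subsingleton.elim x 0, Abelian.Ext.comp_zero]

lemma localCohomologyVanishes_idealOfVars {F σ : Type u} [CommRing F] [IsNoetherianRing F]
    [Nontrivial F] [Fintype σ] {i : ℕ} (hi : i + 1 < Fintype.card σ) :
    LocalCohomologyVanishes (MvPolynomial.idealOfVars σ F) (i + 1) (MvPolynomial σ F) := by
  refine localCohomologyVanishes_of_isRegular ?_ ?_ (isRegular_map_X Finset.univ.nodup_toList)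
    (by simpa using hi)
  · rw [smul_eq_mul, Ideal.mul_top, MvPolynomial.idealOfVars, ← Set.image_univ]
    exact span_X_image_ne_top _
  · intro r hr
    obtain ⟨j, -, rfl⟩ := List.mem_map.1 hr
    exact Ideal.subset_span ⟨j, rfl⟩

end RegularSequence

section LocallyFree

variable {R : Type u} [CommRing R] {J : Ideal R} {M : Type u} [AddCommGroup M] [Module R M]

/-- The sheaf of `M` is locally free on the complement of `V(J)` in `Spec R`. -/
def IsLocallyFreeOff (J : Ideal R) (M : Type*) [AddCommGroup M] [Module R M] : Prop :=
  ∀ p : PrimeSpectrum R, ¬ J ≤ p.asIdeal →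
    Module.Free (Localization.AtPrime p.asIdeal) (LocalizedModule p.asIdeal.primeCompl M)

/-- The sheaf of `M` is locally free of rank `m` on the complement of `V(J)` in `Spec R`. -/
structure IsLocallyFreeOfRankOff (J : Ideal R) (m : ℕ) (M : Type*) [AddCommGroup M]
    [Module R M] : Prop where
  isLocallyFreeOff : IsLocallyFreeOff J M
  rank_eq : ∀ p : PrimeSpectrum R, ¬ J ≤ p.asIdeal →
    Module.rank (Localization.AtPrime p.asIdeal) (LocalizedModule p.asIdeal.primeCompl M) = m

lemma IsLocallyFreeOfRankOff.locallyOff_isInverseUpTo [Module.FinitePresentation R M] {m : ℕ}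
    (h : IsLocallyFreeOfRankOff J m M) :
    LocallyOff J fun s ↦ ∃ (u : M →ₗ[R] Fin m → R) (v : (Fin m → R) →ₗ[R] M),
      IsInverseUpTo s u v := by
  intro p hp hJp
  have free := h.isLocallyFreeOff ⟨p, hp⟩ hJp
  have rank_eq : Module.rank (Localization.AtPrime p) (LocalizedModule p.primeCompl M) =
      Module.rank (Localization.AtPrime p) (Fin m → Localization.AtPrime p) := by
    rw [h.rank_eq ⟨p, hp⟩ hJp, rank_fin_fun]
  obtain ⟨e⟩ := nonempty_linearEquiv_of_rank_eq rank_eq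
  exact exists_isInverseUpTo_of_isLocalizedModule p.primeCompl
    (LocalizedModule.mkLinearMap p.primeCompl M)
    (LinearMap.pi fun j ↦ Algebra.linearMap R (Localization.AtPrime p) ∘ₗ LinearMap.proj j)
    (e.restrictScalars R)

theorem IsLocallyFreeOfRankOff.localCohomologyVanishes_exteriorSquare [IsNoetherianRing R]
    [IsDomain R] [UniqueFactorizationMonoid R] [Module.Finite R M]
    (h : IsLocallyFreeOfRankOff J 2 M) {i : ℕ} (hR : LocalCohomologyVanishes J (i + 2) R) :
    LocalCohomologyVanishes J (i + 2) (⋀[R]^2 M) := by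
  have := Module.finitePresentation_of_finite R M
  obtain ⟨u, hu⟩ := exists_isIsoOff_of_locallyOff_isInverseUpTo
    (h.locallyOff_isInverseUpTo.mul_self fun _ ⟨_, _, huv⟩ ↦ huv.exists_exteriorSquare_fin_two)
  exact hu.localCohomologyVanishes_iff.2 hR

end LocallyFree

section Monad

section Kernel

variable {R P B : Type*} [CommRing R] {J : Ideal R} [AddCommGroup P] [Module R P]
  [AddCommGroup B] [Module R B]

lemma isLocallySplit_subtype_ker [Module.Free R B] {β : P →ₗ[R] B}
    (hβ : ∃ c : ℕ, J ^ c ≤ Module.annihilator R (B ⧸ LinearMap.range β)) :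
    IsLocallySplit J (LinearMap.ker β).subtype β where
  comp_eq_zero := LinearMap.comp_ker_subtype β
  locally_split := by
    obtain ⟨c, hc⟩ := hβ
    refine (locallyOff_mem_pow J c).mono fun s hs ↦ ?_
    obtain ⟨σ, hσ⟩ :=
      exists_section_of_free (exists_apply_eq_smul_of_mem_annihilator (hc hs))
    obtain ⟨r, hr⟩ := exists_isSplittingUpTo_of_section (LinearMap.ker β).subtype_injective
      (LinearMap.exact_subtype_ker_map β) hσ
    exact ⟨r, σ, hr⟩

lemma IsLocallyFreeOff.locallyOff_retraction [IsNoetherianRing R] [Module.Finite R P]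
    {A : Type*} [AddCommGroup A] [Module R A] {α : A →ₗ[R] P} (hα : Function.Injective α)
    (h : IsLocallyFreeOff J (P ⧸ LinearMap.range α)) :
    LocallyOff J fun s ↦ ∃ r : P →ₗ[R] A, ∀ a, r (α a) = s • a := by
  intro p hp hJp
  have := Module.finitePresentation_of_finite R (P ⧸ LinearMap.range α)
  have free := h ⟨p, hp⟩ hJp
  have projective : Module.Projective (Localization p.primeCompl)
      (LocalizedModule p.primeCompl (P ⧸ LinearMap.range α)) := .of_free
  obtain ⟨s, hs, σ, hσ⟩ := exists_section_of_projective_localizedModule p.primeCompl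
    (LinearMap.range α).mkQ_surjective
  obtain ⟨r, hr⟩ :=
    exists_isSplittingUpTo_of_section hα (LinearMap.exact_map_mkQ_range α) hσ
  exact ⟨s, hs, r, hr.retraction_apply⟩

end Kernel

variable {R A P B : Type} [CommRing R] {J : Ideal R} [AddCommGroup A] [Module R A]
  [AddCommGroup P] [Module R P] [AddCommGroup B] [Module R B]
  {α : A →ₗ[R] P} {β : P →ₗ[R] B}

/-- The projection of the cycles `ker β` onto the cohomology `ker β / im α` of a monad. -/
def monadHomologyProj (α : A →ₗ[R] P) (β : P →ₗ[R] B) :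
    LinearMap.ker β →ₗ[R] MonadHomology α β :=
  ((LinearMap.range α).comap (LinearMap.ker β).subtype).mkQ

lemma monadHomologyProj_surjective : Function.Surjective (monadHomologyProj α β) :=
  Submodule.mkQ_surjective _

lemma exact_codRestrict_monadHomologyProj (h : ∀ a, β (α a) = 0) :
    Function.Exact (α.codRestrict (LinearMap.ker β) h) (monadHomologyProj α β) := by
  intro x
  refine (Submodule.Quotient.mk_eq_zero _).trans ?_
  exact exists_congr fun _ ↦ ⟨fun h ↦ Subtype.ext h, congrArg Subtype.val⟩

lemma isLocallySplit_codRestrict_monadHomologyProj [IsNoetherianRing R] [Module.Finite R P]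
    (h : ∀ a, β (α a) = 0) (hα : Function.Injective α)
    (hlf : IsLocallyFreeOff J (P ⧸ LinearMap.range α)) :
    IsLocallySplit J (α.codRestrict (LinearMap.ker β) h) (monadHomologyProj α β) where
  comp_eq_zero := (exact_codRestrict_monadHomologyProj h).linearMap_comp_eq_zero
  locally_split := (hlf.locallyOff_retraction hα).mono fun _ ⟨r, hr⟩ ↦
    ⟨r ∘ₗ (LinearMap.ker β).subtype, exists_isSplittingUpTo_of_retraction
      monadHomologyProj_surjective (exact_codRestrict_monadHomologyProj h) hr⟩

theorem wedge2_vanishing_of_monad_general [IsNoetherianRing R] [IsDomain R]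
    [UniqueFactorizationMonoid R] [Module.Free R A] [Module.Free R B] [Module.Finite R B]
    [Module.Finite R P] (hβα : β ∘ₗ α = 0) (hα : Function.Injective α)
    (hsubbundle : IsLocallyFreeOff J (P ⧸ LinearMap.range α))
    (hβ : ∃ c : ℕ, J ^ c ≤ Module.annihilator R (B ⧸ LinearMap.range β))
    {E : Type} [AddCommGroup E] [Module R E] [Module.Finite R E]
    {f : MonadHomology α β →ₗ[R] E} (hf : IsIsoOff J f) (hE : IsLocallyFreeOfRankOff J 2 E)
    {i : ℕ} (hR : LocalCohomologyVanishes J (i + 2) R)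
    (hvan : LocalCohomologyVanishes J (i + 2) E) :
    LocalCohomologyVanishes J (i + 2) (⋀[R]^2 P) := by
  have := Module.Finite.of_injective α hα
  have β_α (a : A) : β (α a) = 0 := LinearMap.congr_fun hβα a
  have hH : LocalCohomologyVanishes J (i + 2) (MonadHomology α β) :=
    hf.localCohomologyVanishes_iff.2 hvan
  have hH2 : LocalCohomologyVanishes J (i + 2) (⋀[R]^2 (MonadHomology α β)) :=
    hf.exteriorSquare.localCohomologyVanishes_iff.2 (hE.localCohomologyVanishes_exteriorSquare hR)
  have cycles_split := isLocallySplit_codRestrict_monadHomologyProj β_α hα hsubbundle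
  have hG : LocalCohomologyVanishes J (i + 2) (LinearMap.ker β) :=
    cycles_split.localCohomologyVanishes (localCohomologyVanishes_of_free hR) hH
  have hG2 : LocalCohomologyVanishes J (i + 2) (⋀[R]^2 (LinearMap.ker β)) :=
    cycles_split.localCohomologyVanishes_exteriorSquare (localCohomologyVanishes_of_free hR)
      (hH.tensor_free.of_equiv (TensorProduct.comm R _ A)) hH2
  exact (isLocallySplit_subtype_ker hβ).localCohomologyVanishes_exteriorSquare hG2
    hG.tensor_free (localCohomologyVanishes_of_free hR)

end Monad

/-- Let `E` be a rank two vector bundle on `ℙⁿ` arising from a monad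
`0 → A → P → B → 0` with `A, B` free, and suppose `H^l_*(E) = 0` for some
`2 ≤ l ≤ n-2`.  Then `H^l_*(Λ²P) = 0`. -/
theorem wedge2_vanishing_of_monad
    (K : Type) [Field K] (n : ℕ)
    (A B P : Type) [AddCommGroup A] [Module (PolyS K n) A]
    [AddCommGroup B] [Module (PolyS K n) B] [AddCommGroup P] [Module (PolyS K n) P]
    (hAfree : Module.Free (PolyS K n) A) (hAfin : Module.Finite (PolyS K n) A)
    (hBfree : Module.Free (PolyS K n) B) (hBfin : Module.Finite (PolyS K n) B)
    (hP : IsBundleModule K n P)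
    (hP1 : Subsingleton (Hstar K n 1 P))
    (hPn1 : Subsingleton (Hstar K n (n-1) P))
    (α : A →ₗ[PolyS K n] P) (β : P →ₗ[PolyS K n] B)
    (hβα : β.comp α = 0)
    (hαinj : Function.Injective α)
    (hsubbundle : ∀ p : PrimeSpectrum (PolyS K n), p.asIdeal ≠ irrel K n →
      Module.Free (Localization.AtPrime p.asIdeal)
        (LocalizedModule p.asIdeal.primeCompl (P ⧸ LinearMap.range α)))
    (hβsurj : ∃ c : ℕ, (irrel K n) ^ c ≤
      Module.annihilator (PolyS K n) (B ⧸ LinearMap.range β))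
    (E : Type) [AddCommGroup E] [Module (PolyS K n) E]
    (hcoh : ∃ f : MonadHomology α β →ₗ[PolyS K n] E, IsSheafIso K n f)
    (hE : IsRankTwoBundleModule K n E)
    (l : ℕ) (hl1 : 2 ≤ l) (hl2 : l ≤ n - 2)
    (hvan : Subsingleton (Hstar K n l E)) :
    Subsingleton (Hstar K n l (⋀[PolyS K n]^2 P)) := by
  obtain ⟨i, rfl⟩ := Nat.exists_eq_add_of_le' (Nat.one_le_of_lt hl1)
  obtain ⟨f, hker, hcoker⟩ := hcoh
  have := hP.finite
  have := hE.finite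
  have ne_irrel {p : PrimeSpectrum (PolyS K n)} (hp : ¬ irrel K n ≤ p.asIdeal) :
      p.asIdeal ≠ irrel K n := fun h ↦ hp h.ge
  have hE' : IsLocallyFreeOfRankOff (irrel K n) 2 E :=
    ⟨fun p hp ↦ hE.locFree p (ne_irrel hp), fun p hp ↦ hE.rank2 p (ne_irrel hp)⟩
  exact wedge2_vanishing_of_monad_general hβα hαinj (fun p hp ↦ hsubbundle p (ne_irrel hp)) hβsurj
    (isIsoOff_of_pow_le_annihilator hker hcoker) hE'
    (localCohomologyVanishes_idealOfVars (by rw [Fintype.card_fin]; omega)) hvan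
end
end
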